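/- arXiv:2108.06814 — 2 statements merged into one kernel-verified Lean document; each statement's English description precedes it below -/
import Mathlib

section
/- Let H and G be two finitely generated groups such that every group homomorphism from G to (ℝ,+) is trivial, every group homomorphism from the commutator subgroup [G,G] to (ℝ,+) is trivial, every group homomorphism from H to (ℝ,+) is trivial, and every group homomorphism from [H,H] to (ℝ,+) is trivial. Then for any orientation preserving C^1 action of the product group H × G on the circle, the induced action of either the factor H × 1 or the factor 1 × G factors through an action of a finite cyclic group; that is, the image of at least one of the two factors under the action homomorphism is a finite cyclic group. -/
noncomputable section

open MeasureTheory

/-- The circle `S¹ = ℝ/ℤ`. -/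
abbrev 𝕊 : Type := AddCircle (1 : ℝ)

/-- `F : ℝ → ℝ` is a lift of the circle bijection `f` witnessing that `f` is an
orientation preserving homeomorphism of the circle: `F` is a strictly increasing
homeomorphism of `ℝ` (equivalently, continuous and strictly increasing) satisfying
`F (x + 1) = F x + 1`, and projecting to `f`. -/
def IsOPLift (f : Equiv.Perm 𝕊) (F : ℝ → ℝ) : Prop :=
  Continuous F ∧ StrictMono F ∧ (∀ x : ℝ, F (x + 1) = F x + 1) ∧
    ∀ x : ℝ, f (x : 𝕊) = (F x : 𝕊)

/-- `f` is an orientation preserving homeomorphism of the circle. -/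
def IsOPHomeo (f : Equiv.Perm 𝕊) : Prop := ∃ F : ℝ → ℝ, IsOPLift f F

/-- `F` is a lift witnessing that `f` is an orientation preserving `C¹` diffeomorphism
of the circle: an orientation preserving lift which is `C¹` with nowhere vanishing
derivative. -/
def IsC1Lift (f : Equiv.Perm 𝕊) (F : ℝ → ℝ) : Prop :=
  IsOPLift f F ∧ ContDiff ℝ 1 F ∧ ∀ x : ℝ, deriv F x ≠ 0

/-- `f` is an orientation preserving `C¹` diffeomorphism of the circle, i.e. an element
of `Diff¹₊(S¹)`. -/
def IsC1Diffeo (f : Equiv.Perm 𝕊) : Prop := ∃ F : ℝ → ℝ, IsC1Lift f F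

/-! Lift the images of `H` and `G` to groups `Γ`, `Λ` of homeomorphisms of the line commuting
with `x ↦ x + 1`; equality of translation numbers shows that the lifts of commuting homeomorphisms
commute, so `Γ` preserves the fixed point set of every element of `Λ`.

If two disjoint nonempty closed periodic sets `A`, `B` are `Γ`-invariant, then so is the set of
points of `A` that are followed by a point of `B` before any other point of `A`. It is ordered like
`ℤ`, and order automorphisms of `ℤ` commute, so `[Γ, Γ]` acts trivially on it. Hence, if `[Γ, Γ]`
has no global fixed point, the nonempty fixed point sets of elements of `Λ` have the finite
intersection property, and by compactness some `x₀` lies in all of them. The orbit of `x₀` then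
carries a `Λ`-invariant order which forces the translation number to be additive on `Λ`, so that
`[Λ, Λ]` fixes `x₀`.

For a factor whose commutator subgroup fixes a point, the abelianization is finite because it is
finitely generated without homomorphisms to `ℝ`; thus the commutator subgroup is finitely generated
and Thurston's stability theorem makes it act trivially. The image of the factor is therefore
finite, and a finite group of circle homeomorphisms is cyclic because the translation number embeds
its group of lifts into a cyclic group.
-/

namespace CircleAction

section HomomorphismsToReals

lemma isTorsion_of_forall_hom_real_eq_zero {M : Type*} [AddCommGroup M] [Module.Finite ℤ M]
    (hM : ∀ φ : M →+ ℝ, φ = 0) : Module.IsTorsion ℤ M := by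
  let e := Module.Free.chooseBasis ℤ (M ⧸ Submodule.torsion ℤ M)
  intro x
  suffices h : (Submodule.torsion ℤ M).mkQ x = 0 by
    exact (Submodule.mem_torsion_iff x).1 ((Submodule.Quotient.mk_eq_zero _).1 h)
  refine e.forall_coord_eq_zero_iff.1 fun i => ?_
  have hcoord := DFunLike.congr_fun
    (hM ((Int.castAddHom ℝ).comp (e.coord i ∘ₗ (Submodule.torsion ℤ M).mkQ).toAddMonoidHom)) x
  exact Int.cast_eq_zero.1 hcoord

lemma finite_of_forall_hom_real_eq_zero {M : Type*} [AddCommGroup M] [AddGroup.FG M]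
    (hM : ∀ φ : M →+ ℝ, φ = 0) : Finite M := by
  have : Module.Finite ℤ M := Module.Finite.iff_addGroup_fg.2 ‹_›
  exact Module.finite_of_fg_torsion M (isTorsion_of_forall_hom_real_eq_zero hM)

variable {G : Type*} [Group G]

lemma finite_abelianization_of_forall_hom_real_eq_one [Group.FG G]
    (hG : ∀ φ : G →* Multiplicative ℝ, φ = 1) : Finite (Abelianization G) := by
  have : Group.FG (Abelianization G) :=
    Group.fg_of_surjective (f := Abelianization.of) (QuotientGroup.mk'_surjective _)
  refine finite_of_forall_hom_real_eq_zero (M := Additive (Abelianization G)) fun φ => ?_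
  have hφ : φ.toMultiplicativeRight = 1 := Abelianization.hom_ext _ _ (hG _)
  exact AddMonoidHom.ext fun x => DFunLike.congr_fun hφ x.toMul

lemma hom_eq_one_of_forall_hom_real_eq_one (hG : ∀ φ : G →* Multiplicative ℝ, φ = 1)
    {E : Type*} [NormedAddCommGroup E] [NormedSpace ℝ E] (ψ : G →* Multiplicative E) : ψ = 1 := by
  refine MonoidHom.ext fun g => Multiplicative.toAdd.injective ?_
  refine SeparatingDual.eq_zero_of_forall_dual_eq_zero (R := ℝ) fun f => ?_
  exact DFunLike.congr_fun (hG ((AddMonoidHomClass.toAddMonoidHom f).toMultiplicative.comp ψ)) g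

lemma map_mem_commutator {G' : Type*} [Group G'] (f : G →* G') {g : G} (hg : g ∈ commutator G) :
    f g ∈ commutator G' := by
  have hle : (commutator G).map f ≤ commutator G' := by
    rw [commutator_def, Subgroup.map_commutator]
    exact Subgroup.commutator_mono le_top le_top
  exact hle (Subgroup.mem_map_of_mem f hg)

end HomomorphismsToReals

section ThurstonStability

open Asymptotics Filter Topology

variable {L E : Type*} [Group L] [NormedAddCommGroup E] [MulAction L E]

/-- The total displacement of `x` under a finite set `S` of group elements. When `S` generates, it
vanishes exactly at the global fixed points and is the scale by which Thurston's argument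
renormalizes the action. -/
def displacement (S : Finset L) (x : E) : ℝ := ∑ s ∈ S, ‖s • x - x‖

lemma displacement_nonneg (S : Finset L) (x : E) : 0 ≤ displacement S x :=
  Finset.sum_nonneg fun _ _ => norm_nonneg _

lemma mem_fixedPoints_of_displacement_eq_zero {S : Finset L}
    (hS : Subgroup.closure (S : Set L) = ⊤) {x : E} (hx : displacement S x = 0) :
    x ∈ MulAction.fixedPoints L E := by
  have hgen : Subgroup.closure (S : Set L) ≤ MulAction.stabilizer L x := by
    rw [Subgroup.closure_le]
    intro s hs
    have h := (Finset.sum_eq_zero_iff_of_nonneg fun s _ => norm_nonneg (s • x - x)).1 hx s hs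
    exact sub_eq_zero.1 (norm_eq_zero.1 h)
  exact fun g => hgen (hS ▸ Subgroup.mem_top g)

lemma displacement_pos {S : Finset L} (hS : Subgroup.closure (S : Set L) = ⊤) {x : E}
    (hx : x ∉ MulAction.fixedPoints L E) : 0 < displacement S x :=
  (displacement_nonneg S x).lt_of_ne' fun h => hx (mem_fixedPoints_of_displacement_eq_zero hS h)

variable [NormedSpace ℝ E]

variable (L) in
/-- Every element of `L` fixes `x₀` and is strictly differentiable there, with derivative the
identity. -/
def IsTangentToIdentity (x₀ : E) : Prop :=
  ∀ g : L, g • x₀ = x₀ ∧ HasStrictFDerivAt (fun x : E => g • x) (ContinuousLinearMap.id ℝ E) x₀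

lemma IsTangentToIdentity.tendsto_smul {x₀ : E} (h : IsTangentToIdentity L x₀) (g : L) :
    Tendsto (fun x => g • x) (𝓝 x₀) (𝓝 x₀) := by
  simpa only [(h g).1] using (h g).2.continuousAt.tendsto

-- To first order at `x₀`, the displacement `g • x - x` is additive in `g`.
lemma IsTangentToIdentity.isLittleO_mul_smul_sub {x₀ : E} (hL : IsTangentToIdentity L x₀)
    (g h : L) :
    (fun x : E => (g * h) • x - x - ((g • x - x) + (h • x - x))) =o[𝓝 x₀]
      fun x => h • x - x := by
  have hlim : Tendsto (fun x => (h • x, x)) (𝓝 x₀) (𝓝 (x₀, x₀)) := by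
    rw [nhds_prod_eq]
    exact (hL.tendsto_smul h).prodMk tendsto_id
  refine ((hL g).2.isLittleO.comp_tendsto hlim).congr_left fun x => ?_
  simp only [Function.comp_apply, ContinuousLinearMap.id_apply, mul_smul]
  abel

lemma IsTangentToIdentity.isBigO_inv_smul_sub {x₀ : E} (hL : IsTangentToIdentity L x₀) (g : L) :
    (fun x : E => g⁻¹ • x - x) =O[𝓝 x₀] fun x => g • x - x := by
  have hequiv : (fun x : E => -(g • x - x)) ~[𝓝 x₀] fun x => g⁻¹ • x - x :=
    (hL.isLittleO_mul_smul_sub g g⁻¹).congr_left fun x => by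
      simp only [mul_inv_cancel, one_smul, Pi.sub_apply]
      abel
  exact isBigO_neg_right.1 hequiv.isBigO_symm

lemma IsTangentToIdentity.isBigO_displacement {x₀ : E} (hL : IsTangentToIdentity L x₀)
    {S : Finset L} (hS : Subgroup.closure (S : Set L) = ⊤) (g : L) :
    (fun x : E => g • x - x) =O[𝓝 x₀] displacement S := by
  have hg : g ∈ Subgroup.closure (S : Set L) := hS ▸ Subgroup.mem_top g
  induction hg using Subgroup.closure_induction with
  | mem s hs =>
    refine isBigO_of_le _ fun x => ?_
    rw [Real.norm_of_nonneg (displacement_nonneg S x)]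
    exact Finset.single_le_sum (f := fun s : L => ‖s • x - x‖) (fun _ _ => norm_nonneg _) hs
  | one => simpa only [one_smul, sub_self] using isBigO_zero _ _
  | mul g h _ _ ihg ihh =>
    have hrem := (hL.isLittleO_mul_smul_sub g h).isBigO.trans ihh
    exact (hrem.add (ihg.add ihh)).congr_left fun x => sub_add_cancel _ _
  | inv g _ ih => exact (hL.isBigO_inv_smul_sub g).trans ih

lemma exists_tendsto_inv_smul_of_isBigO [ProperSpace E] {α : Type*} {U : Ultrafilter α}
    {f : α → E} {r : α → ℝ} (hfr : f =O[(U : Filter α)] r) :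
    ∃ t, Tendsto (fun x => (r x)⁻¹ • f x) U (𝓝 t) := by
  obtain ⟨C, hC⟩ := hfr.bound
  have hbound : ∀ᶠ x in (U : Filter α), (r x)⁻¹ • f x ∈ Metric.closedBall (0 : E) |C| := by
    filter_upwards [hC] with x hx
    rw [mem_closedBall_zero_iff, norm_smul, norm_inv, inv_mul_eq_div]
    refine div_le_of_le_mul₀ (norm_nonneg _) (abs_nonneg C) (hx.trans ?_)
    gcongr
    exact le_abs_self C
  obtain ⟨t, -, ht⟩ := (isCompact_closedBall (0 : E) |C|).ultrafilter_le_nhds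
    (U.map fun x => (r x)⁻¹ • f x) (le_principal_iff.2 hbound)
  exact ⟨t, ht⟩

lemma IsTangentToIdentity.exists_tendsto_additive [ProperSpace E] {x₀ : E}
    (hL : IsTangentToIdentity L x₀) {S : Finset L} (hS : Subgroup.closure (S : Set L) = ⊤)
    {U : Ultrafilter E} (hU : (U : Filter E) ≤ 𝓝 x₀) :
    ∃ ψ : L →* Multiplicative E,
      ∀ g, Tendsto (fun x => (displacement S x)⁻¹ • (g • x - x)) U (𝓝 (ψ g).toAdd) := by
  have hbigO (g : L) := (hL.isBigO_displacement hS g).mono hU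
  choose ψ hψ using fun g => exists_tendsto_inv_smul_of_isBigO (hbigO g)
  refine ⟨MonoidHom.mk' (fun g => .ofAdd (ψ g)) fun g h => ?_, hψ⟩
  have hzero := (((hL.isLittleO_mul_smul_sub g h).mono hU).trans_isBigO
    (hbigO h)).tendsto_inv_smul_nhds_zero
  have hsub := (hψ (g * h)).sub ((hψ g).add (hψ h))
  simp only [← smul_add, ← smul_sub] at hsub
  exact congrArg Multiplicative.ofAdd (sub_eq_zero.1 (tendsto_nhds_unique hsub hzero))

theorem thurston_stability [ProperSpace E] [Group.FG L]
    (hL : ∀ φ : L →* Multiplicative ℝ, φ = 1) {x₀ : E} (hx₀ : IsTangentToIdentity L x₀) :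
    MulAction.fixedPoints L E ∈ 𝓝 x₀ := by
  by_contra hmem
  obtain ⟨S, hS⟩ := Group.FG.out (G := L)
  have hne : (𝓝 x₀ ⊓ 𝓟 (MulAction.fixedPoints L E)ᶜ).NeBot := by
    rwa [neBot_iff, Ne, inf_principal_eq_bot, compl_compl]
  obtain ⟨U, hU⟩ := Ultrafilter.exists_le (𝓝 x₀ ⊓ 𝓟 (MulAction.fixedPoints L E)ᶜ)
  obtain ⟨ψ, hψ⟩ := hx₀.exists_tendsto_additive hS (hU.trans inf_le_left)
  have hlim : Tendsto (fun x : E => ∑ s ∈ S, ‖(displacement S x)⁻¹ • (s • x - x)‖) U (𝓝 0) := by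
    have h := tendsto_finsetSum S fun s _ => (hψ s).norm
    simpa [hom_eq_one_of_forall_hom_real_eq_one hL ψ] using h
  have hone : ∀ᶠ x in (U : Filter E), ∑ s ∈ S, ‖(displacement S x)⁻¹ • (s • x - x)‖ = 1 := by
    filter_upwards [le_principal_iff.1 (hU.trans inf_le_right)] with x hx
    have hpos := displacement_pos hS hx
    simp only [norm_smul, norm_inv, Real.norm_of_nonneg hpos.le, ← Finset.mul_sum]
    exact inv_mul_cancel₀ hpos.ne'
  exact one_ne_zero (tendsto_nhds_unique (tendsto_const_nhds.congr' (hone.mono fun _ h => h.symm))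
    hlim)

lemma deriv_smul_eq_one [MulAction L ℝ] (hL : ∀ φ : L →* Multiplicative ℝ, φ = 1) {x₀ : ℝ}
    (hx₀ : x₀ ∈ MulAction.fixedPoints L ℝ) (hmono : ∀ g : L, Monotone fun x : ℝ => g • x)
    (hdiff : ∀ g : L, DifferentiableAt ℝ (fun x : ℝ => g • x) x₀) (g : L) :
    deriv (fun x : ℝ => g • x) x₀ = 1 := by
  have hmul (g h : L) : deriv (fun x : ℝ => (g * h) • x) x₀ =
      deriv (fun x : ℝ => g • x) x₀ * deriv (fun x : ℝ => h • x) x₀ := by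
    have hcomp : (fun x : ℝ => (g * h) • x) = (fun x : ℝ => g • x) ∘ fun x => h • x :=
      funext fun x => mul_smul g h x
    rw [hcomp, deriv_comp _ (by rw [hx₀ h]; exact hdiff g) (hdiff h), hx₀ h]
  have hone : deriv (fun x : ℝ => (1 : L) • x) x₀ = 1 := by
    simp only [one_smul, deriv_id'']
  have hne (g : L) : deriv (fun x : ℝ => g • x) x₀ ≠ 0 := by
    refine left_ne_zero_of_mul_eq_one (b := deriv (fun x : ℝ => g⁻¹ • x) x₀) ?_
    rw [← hmul, mul_inv_cancel, hone]
  let logDeriv : L →* Multiplicative ℝ :=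
    MonoidHom.mk' (fun g => .ofAdd (Real.log (deriv (fun x : ℝ => g • x) x₀))) fun g h => by
      rw [hmul, Real.log_mul (hne g) (hne h), ofAdd_add]
  have hlog : Real.log (deriv (fun x : ℝ => g • x) x₀) = 0 := DFunLike.congr_fun (hL logDeriv) g
  exact Real.eq_one_of_pos_of_log_eq_zero ((hmono g).deriv_nonneg.lt_of_ne' (hne g)) hlog

lemma isTangentToIdentity_of_contDiff [MulAction L ℝ] (hL : ∀ φ : L →* Multiplicative ℝ, φ = 1)
    (hmono : ∀ g : L, Monotone fun x : ℝ => g • x) (hC : ∀ g : L, ContDiff ℝ 1 fun x : ℝ => g • x)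
    {x₀ : ℝ} (hx₀ : x₀ ∈ MulAction.fixedPoints L ℝ) : IsTangentToIdentity L x₀ := by
  refine fun g => ⟨hx₀ g, ?_⟩
  have hdiff (g : L) := (hC g).differentiable one_ne_zero x₀
  have hstrict := (hC g).contDiffAt.hasStrictDerivAt (x := x₀) one_ne_zero
  rw [deriv_smul_eq_one hL hx₀ hmono hdiff] at hstrict
  exact hstrict.hasStrictFDerivAt.congr_fderiv (ContinuousLinearMap.ext fun x => by simp)

theorem fixedPoints_eq_univ_of_contDiff [Group.FG L] [MulAction L ℝ]
    (hL : ∀ φ : L →* Multiplicative ℝ, φ = 1) (hmono : ∀ g : L, Monotone fun x : ℝ => g • x)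
    (hC : ∀ g : L, ContDiff ℝ 1 fun x : ℝ => g • x)
    (hne : (MulAction.fixedPoints L ℝ).Nonempty) : MulAction.fixedPoints L ℝ = Set.univ := by
  have hclosed : IsClosed (MulAction.fixedPoints L ℝ) := by
    simp only [MulAction.fixedPoints, Set.ofPred_forall]
    exact isClosed_iInter fun g => isClosed_eq (hC g).continuous continuous_id
  have hopen : IsOpen (MulAction.fixedPoints L ℝ) := isOpen_iff_mem_nhds.2 fun _ hx =>
    thurston_stability hL (isTangentToIdentity_of_contDiff hL hmono hC hx)
  exact IsClopen.eq_univ ⟨hclosed, hopen⟩ hne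

end ThurstonStability

section OrderedMonoid

lemma pow_mul_pow_le_mul_pow {M : Type*} [Monoid M] [Preorder M] [MulLeftMono M] [MulRightMono M]
    {a b : M} (h : a * b ≤ b * a) (n : ℕ) : a ^ n * b ^ n ≤ (a * b) ^ n := by
  have hswap (n : ℕ) : a ^ n * b ≤ b * a ^ n := by
    induction n with
    | zero => simp
    | succ n ih =>
      calc a ^ (n + 1) * b = a ^ n * (a * b) := by rw [pow_succ, mul_assoc]
        _ ≤ a ^ n * (b * a) := by gcongr
        _ = a ^ n * b * a := (mul_assoc _ _ _).symm
        _ ≤ b * a ^ n * a := by gcongr ?_ * a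
        _ = b * a ^ (n + 1) := by rw [pow_succ, mul_assoc]
  induction n with
  | zero => simp
  | succ n ih =>
    calc a ^ (n + 1) * b ^ (n + 1) = a * (a ^ n * b) * b ^ n := by
          rw [pow_succ' a, pow_succ' b]; simp only [mul_assoc]
      _ ≤ a * (b * a ^ n) * b ^ n := by gcongr a * ?_ * _; exact hswap n
      _ = a * b * (a ^ n * b ^ n) := by simp only [mul_assoc]
      _ ≤ a * b * (a * b) ^ n := by gcongr a * b * ?_
      _ = (a * b) ^ (n + 1) := (pow_succ' _ _).symm

lemma mul_pow_le_pow_mul_pow {M : Type*} [Monoid M] [Preorder M] [MulLeftMono M] [MulRightMono M]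
    {a b : M} (h : a * b ≤ b * a) (n : ℕ) : (a * b) ^ n ≤ b ^ n * a ^ n :=
  (pow_le_pow_left' h n).trans (pow_mul_pow_le_mul_pow (M := Mᵒᵈ) (a := b) (b := a) h n)

end OrderedMonoid

section TranslationNumber

open CircleDeg1Lift

lemma dist_map_sub_self_lt (f : CircleDeg1Lift) (x y : ℝ) : dist (f x - x) (f y - y) < 2 := by
  have hx (x : ℝ) : dist (f x - x) (f 0) < 1 := by
    have h := f.dist_map_map_zero_lt (translate (.ofAdd x))
    rw [translate_apply, add_zero, dist_comm] at h
    rwa [← dist_add_right _ _ x, sub_add_cancel]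
  calc dist (f x - x) (f y - y) ≤ dist (f x - x) (f 0) + dist (f y - y) (f 0) :=
        dist_triangle_right _ _ _
    _ < 1 + 1 := add_lt_add (hx x) (hx y)
    _ = 2 := one_add_one_eq_two

lemma strictMono_coe_units (u : CircleDeg1Liftˣ) : StrictMono u := (toOrderIso u).strictMono

lemma continuous_coe_units (u : CircleDeg1Liftˣ) : Continuous u := (toOrderIso u).continuous

/-- The point `x₀` is fixed by every element of `Γ` that has a fixed point at all. -/
def IsUniversalFixedPt (Γ : Subgroup CircleDeg1Liftˣ) (x₀ : ℝ) : Prop :=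
  ∀ u ∈ Γ, (∃ x, u x = x) → u x₀ = x₀

/-- Any two elements of `Γ` commute at the point `p`; equivalently, the commutator subgroup of `Γ`
fixes `p`. -/
def CommutesAt (Γ : Subgroup CircleDeg1Liftˣ) (p : ℝ) : Prop :=
  ∀ u ∈ Γ, ∀ v ∈ Γ, u (v p) = v (u p)

variable {Γ : Subgroup CircleDeg1Liftˣ} {x₀ : ℝ}

lemma IsUniversalFixedPt.apply_eq_of_translationNumber_eq_zero (hΓ : IsUniversalFixedPt Γ x₀)
    {u : CircleDeg1Liftˣ} (hu : u ∈ Γ) (h : translationNumber u = 0) : u x₀ = x₀ := by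
  have hfix := (translationNumber_eq_int_iff (u : CircleDeg1Lift) (continuous_coe_units u)
    (m := 0)).1 (by rw [h, Int.cast_zero])
  exact hΓ u hu (by simpa only [Int.cast_zero, add_zero] using hfix)

lemma IsUniversalFixedPt.translationNumber_nonpos_iff (hΓ : IsUniversalFixedPt Γ x₀)
    {u : CircleDeg1Liftˣ} (hu : u ∈ Γ) : translationNumber u ≤ 0 ↔ u x₀ ≤ x₀ := by
  refine ⟨fun hτ => le_of_not_gt fun hlt => hlt.ne' ?_, fun hle => ?_⟩
  · have hnonneg : 0 ≤ translationNumber u := by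
      have h := le_translationNumber_of_add_int_le (u : CircleDeg1Lift) (x := x₀) (m := 0)
      simp only [Int.cast_zero, add_zero] at h
      exact h hlt.le
    exact hΓ.apply_eq_of_translationNumber_eq_zero hu (hτ.antisymm hnonneg)
  · have h := translationNumber_le_of_le_add_int (u : CircleDeg1Lift) (x := x₀) (m := 0)
    simp only [Int.cast_zero, add_zero] at h
    exact h hle

-- Conjugation invariance of the translation number makes the order of the orbit of `x₀`
-- right-invariant.
lemma IsUniversalFixedPt.apply_apply_le_apply_apply (hΓ : IsUniversalFixedPt Γ x₀)
    {u v w : CircleDeg1Liftˣ} (hu : u ∈ Γ) (hv : v ∈ Γ) (hw : w ∈ Γ) (h : u x₀ ≤ v x₀) :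
    u (w x₀) ≤ v (w x₀) := by
  have hvu := Γ.mul_mem (Γ.inv_mem hv) hu
  have hτ : translationNumber (v⁻¹ * u : CircleDeg1Liftˣ) ≤ 0 := by
    refine (hΓ.translationNumber_nonpos_iff hvu).2 ((strictMono_coe_units v).le_iff_le.1 ?_)
    simpa using h
  rw [← translationNumber_conj_eq' w, ← Units.val_mul, ← Units.val_mul,
    hΓ.translationNumber_nonpos_iff (Γ.mul_mem (Γ.mul_mem (Γ.inv_mem hw) hvu) hw)] at hτ
  simpa using (v * w : CircleDeg1Lift).monotone hτ

lemma IsUniversalFixedPt.pow_apply_mem_Icc (hΓ : IsUniversalFixedPt Γ x₀)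
    {a b : CircleDeg1Liftˣ} (ha : a ∈ Γ) (hb : b ∈ Γ) (h : a (b x₀) ≤ b (a x₀)) (n : ℕ) :
    ((a * b : CircleDeg1Lift) ^ n) x₀ ∈
      Set.Icc ((a ^ n : CircleDeg1Lift) ((b ^ n : CircleDeg1Lift) x₀))
        ((b ^ n : CircleDeg1Lift) ((a ^ n : CircleDeg1Lift) x₀)) := by
  let order : Preorder Γ := Preorder.lift fun u : Γ => u.1 x₀
  -- shadows the order that `Γ` inherits from `CircleDeg1Lift`
  let _ : LE Γ := order.toLE
  have : MulLeftMono Γ := ⟨fun u _ _ hvw => (strictMono_coe_units u.1).monotone hvw⟩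
  have : MulRightMono Γ := ⟨fun w u v huv => hΓ.apply_apply_le_apply_apply u.2 v.2 w.2 huv⟩
  exact ⟨pow_mul_pow_le_mul_pow (a := (⟨a, ha⟩ : Γ)) (b := ⟨b, hb⟩) h n,
    mul_pow_le_pow_mul_pow (a := (⟨a, ha⟩ : Γ)) (b := ⟨b, hb⟩) h n⟩

theorem IsUniversalFixedPt.translationNumber_mul (hΓ : IsUniversalFixedPt Γ x₀)
    {a b : CircleDeg1Liftˣ} (ha : a ∈ Γ) (hb : b ∈ Γ) :
    translationNumber (a * b : CircleDeg1Lift) = translationNumber a + translationNumber b := by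
  wlog h : a (b x₀) ≤ b (a x₀) generalizing a b
  · rw [add_comm, ← this hb ha (le_of_not_ge h), ← translationNumber_conj_eq' b (b * a),
      ← mul_assoc, Units.inv_mul, one_mul]
  have hbound (n : ℕ) : dist (((a * b : CircleDeg1Lift) ^ n) x₀ - x₀)
      (((a ^ n : CircleDeg1Lift) x₀ - x₀) + ((b ^ n : CircleDeg1Lift) x₀ - x₀)) ≤ 2 := by
    obtain ⟨hlow, hupp⟩ := hΓ.pow_apply_mem_Icc ha hb h n
    have ha := dist_map_sub_self_lt (a ^ n : CircleDeg1Lift) ((b ^ n : CircleDeg1Lift) x₀) x₀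
    have hb := dist_map_sub_self_lt (b ^ n : CircleDeg1Lift) ((a ^ n : CircleDeg1Lift) x₀) x₀
    rw [Real.dist_eq, abs_lt] at ha hb
    rw [Real.dist_eq, abs_le]
    constructor <;> linarith
  have hlim := (tendsto_translationNumber (a : CircleDeg1Lift) x₀).add
    (tendsto_translationNumber (b : CircleDeg1Lift) x₀)
  refine tendsto_nhds_unique (tendsto_translationNumber (a * b : CircleDeg1Lift) x₀)
    (hlim.congr_dist ?_)
  refine squeeze_zero (fun _ => dist_nonneg) (fun n => ?_)
    (tendsto_const_div_atTop_nhds_zero_nat 2)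
  rw [dist_comm, ← add_div, Real.dist_eq, ← sub_div, abs_div, Nat.abs_cast, ← Real.dist_eq]
  exact div_le_div_of_nonneg_right (hbound n) n.cast_nonneg

lemma IsUniversalFixedPt.commutesAt (hΓ : IsUniversalFixedPt Γ x₀) : CommutesAt Γ x₀ := by
  intro u hu v hv
  have hmem := Γ.mul_mem (Γ.inv_mem (Γ.mul_mem hv hu)) (Γ.mul_mem hu hv)
  have hτ : translationNumber ((v * u)⁻¹ * (u * v) : CircleDeg1Liftˣ) = 0 := by
    rw [Units.val_mul, hΓ.translationNumber_mul (Γ.inv_mem (Γ.mul_mem hv hu)) (Γ.mul_mem hu hv),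
      translationNumber_units_inv, Units.val_mul, Units.val_mul, hΓ.translationNumber_mul hv hu,
      hΓ.translationNumber_mul hu hv]
    ring
  have hfix := hΓ.apply_eq_of_translationNumber_eq_zero hmem hτ
  simpa using congrArg (v * u : CircleDeg1Liftˣ) hfix

end TranslationNumber

section ExitPoints

open Set

lemma orderIso_int_apply (e : ℤ ≃o ℤ) (n : ℤ) : e n = n + e 0 := by
  have hsucc (n : ℤ) : e (n + 1) = e n + 1 := e.map_succ n
  induction n using Int.induction_on with
  | zero => rw [zero_add]
  | succ n ih => rw [hsucc, ih]; ring
  | pred n ih =>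
    have h := hsucc (-n - 1)
    rw [sub_add_cancel, ih] at h
    linarith

lemma commute_orderIso_of_orderIso_int {α : Type*} [LE α] (e : α ≃o ℤ) (f g : α ≃o α) :
    Function.Commute f g := by
  have htrans (f : α ≃o α) (x : α) : e (f x) = e x + e (f (e.symm 0)) := by
    simpa using orderIso_int_apply ((e.symm.trans f).trans e) (e x)
  refine fun x => e.injective ?_
  rw [htrans f (g x), htrans g x, htrans g (f x), htrans f x]
  exact add_right_comm (e x) _ _

lemma nonempty_orderIso_int_of_separated {P : Set ℝ} [Nonempty P] [NoMaxOrder P] [NoMinOrder P]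
    {δ : ℝ} (hδ : 0 < δ) (hP : ∀ x ∈ P, ∀ y ∈ P, x < y → δ ≤ y - x) : Nonempty (P ≃o ℤ) := by
  have hstrict : StrictMono fun x : P => ⌊x.1 / δ⌋ := by
    refine fun x y hxy => Int.add_one_le_iff.1 ?_
    rw [← Int.floor_add_one]
    refine Int.floor_mono ?_
    calc x.1 / δ + 1 = (x.1 + δ) / δ := by rw [add_div, div_self hδ.ne']
      _ ≤ y.1 / δ := div_le_div_of_nonneg_right (by linarith [hP x x.2 y y.2 hxy]) hδ.le
  have hfin (a b : P) : (Icc a b).Finite :=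
    ((finite_Icc _ _).subset hstrict.monotone.image_Icc_subset).of_finite_image
      hstrict.injective.injOn
  let _ : LocallyFiniteOrder P := LocallyFiniteOrder.ofFiniteIcc hfin
  let _ : SuccOrder P := LinearLocallyFiniteOrder.succOrder P
  let _ : PredOrder P := LinearLocallyFiniteOrder.predOrder P
  exact ⟨orderIsoIntOfLinearSuccPredArch⟩

/-- The points of `A` that are followed by a point of `B` before any other point of `A`. -/
def exitPoints {α : Type*} [Preorder α] (A B : Set α) : Set α :=
  {p | p ∈ A ∧ ∃ q ∈ B, p < q ∧ ∀ z ∈ A, p < z → q ≤ z}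

lemma map_mem_exitPoints_iff {α : Type*} [Preorder α] {A B : Set α} (f : α ≃o α)
    (hA : ∀ x, f x ∈ A ↔ x ∈ A) (hB : ∀ x, f x ∈ B ↔ x ∈ B) (p : α) :
    f p ∈ exitPoints A B ↔ p ∈ exitPoints A B :=
  and_congr (hA p) <| f.surjective.exists.trans <| exists_congr fun q =>
    and_congr (hB q) <| and_congr f.lt_iff_lt <| f.surjective.forall.trans <|
      forall_congr' fun z => by rw [hA, f.lt_iff_lt, f.le_iff_le]

lemma exists_mem_exitPoints {α : Type*} [ConditionallyCompleteLinearOrder α] [TopologicalSpace α]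
    [OrderTopology α] {A B : Set α} (hA : IsClosed A) (hAB : Disjoint A B) {a b : α}
    (ha : a ∈ A) (hb : b ∈ B) (hab : a ≤ b) : (exitPoints A B).Nonempty := by
  have hbdd : BddAbove (A ∩ Iic b) := bddAbove_Iic.mono inter_subset_right
  have hmem := (hA.inter isClosed_Iic).csSup_mem ⟨a, ha, hab⟩ hbdd
  refine ⟨_, hmem.1, b, hb, hmem.2.lt_of_ne (hAB.ne_of_mem hmem.1 hb), fun z hz hlt => ?_⟩
  exact le_of_not_ge fun hzb => (le_csSup hbdd ⟨hz, hzb⟩).not_gt hlt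

variable {A B : Set ℝ} {c : ℝ}

lemma exists_pos_forall_le_dist_of_periodic (hc : 0 < c) (hA : IsClosed A) (hB : IsClosed B)
    (hAc : Function.Periodic (· ∈ A) c) (hBc : Function.Periodic (· ∈ B) c)
    (hAB : Disjoint A B) : ∃ δ > 0, ∀ a ∈ A, ∀ b ∈ B, δ ≤ dist a b := by
  obtain ⟨δ, hδ, hdist⟩ := Metric.exists_pos_forall_lt_edist
    (isCompact_Icc.inter_left hA : IsCompact (A ∩ Icc 0 c)) hB (hAB.mono_left inter_subset_left)
  refine ⟨δ, hδ, fun a ha b hb => ?_⟩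
  have ha' : a - toIcoDiv hc 0 a • c ∈ A ∩ Icc 0 c :=
    ⟨(hAc.sub_zsmul_eq _).mpr ha, by simpa using Ico_subset_Icc_self (toIcoMod_mem_Ico hc 0 a)⟩
  have hb' : b - toIcoDiv hc 0 a • c ∈ B := (hBc.sub_zsmul_eq _).mpr hb
  have h := hdist _ ha' _ hb'
  rw [edist_nndist, ENNReal.coe_lt_coe, nndist_sub_right] at h
  exact_mod_cast h.le

lemma exitPoints_nonempty (hc : 0 < c) (hA : IsClosed A) (hBc : Function.Periodic (· ∈ B) c)
    (hAB : Disjoint A B) (hAne : A.Nonempty) (hBne : B.Nonempty) : (exitPoints A B).Nonempty := by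
  obtain ⟨a, ha⟩ := hAne
  obtain ⟨b, hb⟩ := hBne
  obtain ⟨b', hab', hb'⟩ := hBc.exists_mem_Ico hc b a
  exact exists_mem_exitPoints hA hAB ha (hb'.mp hb) hab'.1

lemma add_mem_exitPoints (hAc : Function.Periodic (· ∈ A) c) (hBc : Function.Periodic (· ∈ B) c)
    {p : ℝ} (hp : p ∈ exitPoints A B) : p + c ∈ exitPoints A B :=
  (map_mem_exitPoints_iff (OrderIso.addRight c) (fun x => (hAc x).to_iff) (fun x => (hBc x).to_iff)
    p).2 hp

theorem nonempty_exitPoints_orderIso_int (hc : 0 < c) (hA : IsClosed A) (hB : IsClosed B)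
    (hAc : Function.Periodic (· ∈ A) c) (hBc : Function.Periodic (· ∈ B) c)
    (hAB : Disjoint A B) (hne : (exitPoints A B).Nonempty) : Nonempty (exitPoints A B ≃o ℤ) := by
  have : Nonempty (exitPoints A B) := hne.to_subtype
  have : NoMaxOrder (exitPoints A B) :=
    ⟨fun p => ⟨⟨p + c, add_mem_exitPoints hAc hBc p.2⟩, lt_add_of_pos_right p.1 hc⟩⟩
  have : NoMinOrder (exitPoints A B) :=
    ⟨fun p => ⟨⟨p + -c, add_mem_exitPoints hAc.neg hBc.neg p.2⟩,
      add_lt_of_neg_right p.1 (neg_lt_zero.2 hc)⟩⟩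
  obtain ⟨δ, hδ, hdist⟩ := exists_pos_forall_le_dist_of_periodic hc hA hB hAc hBc hAB
  refine nonempty_orderIso_int_of_separated hδ ?_
  rintro x ⟨hx, q, hq, hxq, hfirst⟩ y ⟨hy, -⟩ hxy
  have h := hdist x hx q hq
  rw [dist_comm, Real.dist_eq, abs_of_pos (sub_pos.2 hxq)] at h
  exact h.trans (sub_le_sub_right (hfirst y hy hxy) x)

theorem map_map_comm_of_mem_exitPoints (hc : 0 < c) (hA : IsClosed A) (hB : IsClosed B)
    (hAc : Function.Periodic (· ∈ A) c) (hBc : Function.Periodic (· ∈ B) c)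
    (hAB : Disjoint A B) {f g : ℝ ≃o ℝ} (hfA : ∀ x, f x ∈ A ↔ x ∈ A) (hfB : ∀ x, f x ∈ B ↔ x ∈ B)
    (hgA : ∀ x, g x ∈ A ↔ x ∈ A) (hgB : ∀ x, g x ∈ B ↔ x ∈ B) {p : ℝ}
    (hp : p ∈ exitPoints A B) : f (g p) = g (f p) := by
  obtain ⟨e⟩ := nonempty_exitPoints_orderIso_int hc hA hB hAc hBc hAB ⟨p, hp⟩
  have h := commute_orderIso_of_orderIso_int e
    ⟨f.toEquiv.subtypeEquiv fun x => (map_mem_exitPoints_iff f hfA hfB x).symm, f.le_iff_le⟩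
    ⟨g.toEquiv.subtypeEquiv fun x => (map_mem_exitPoints_iff g hgA hgB x).symm, g.le_iff_le⟩
    ⟨p, hp⟩
  exact congrArg Subtype.val h

end ExitPoints

section Dichotomy

open Set Function

lemma iInter_nonempty_of_periodic {ι : Type*} {F : ι → Set ℝ} {c : ℝ} (hc : 0 < c)
    (hF : ∀ i, IsClosed (F i)) (hFc : ∀ i, Periodic (· ∈ F i) c)
    (hfin : ∀ s : Finset ι, (⋂ i ∈ s, F i).Nonempty) : (⋂ i, F i).Nonempty := by
  refine ((isCompact_Icc (a := 0) (b := c)).inter_iInter_nonempty F hF fun s => ?_).mono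
    inter_subset_right
  obtain ⟨x, hx⟩ := hfin s
  refine ⟨x - toIcoDiv hc 0 x • c, ?_, ?_⟩
  · simpa using Ico_subset_Icc_self (toIcoMod_mem_Ico hc 0 x)
  · exact mem_iInter₂.2 fun i hi => ((hFc i).sub_zsmul_eq _).mpr (mem_iInter₂.1 hx i hi)

lemma isClosed_fixedPoints_coe_units (v : CircleDeg1Liftˣ) : IsClosed (fixedPoints v) :=
  isClosed_eq (continuous_coe_units v) continuous_id

lemma periodic_mem_fixedPoints (f : CircleDeg1Lift) : Periodic (· ∈ fixedPoints f) 1 := fun x => by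
  simp only [mem_fixedPoints, IsFixedPt, f.map_add_one, add_left_inj]

lemma mem_fixedPoints_iff_of_commute {u v : CircleDeg1Liftˣ} (h : Commute u v) (x : ℝ) :
    u x ∈ fixedPoints v ↔ x ∈ fixedPoints v := by
  have hcomm : v (u x) = u (v x) := (DFunLike.congr_fun (congrArg Units.val h.eq) x).symm
  rw [mem_fixedPoints, IsFixedPt, hcomm, (strictMono_coe_units u).injective.eq_iff, mem_fixedPoints,
    IsFixedPt]

variable {Γ Λ : Subgroup CircleDeg1Liftˣ}

lemma exists_commutesAt_of_disjoint {A B : Set ℝ} {c : ℝ} (hc : 0 < c) (hA : IsClosed A)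
    (hB : IsClosed B) (hAc : Periodic (· ∈ A) c) (hBc : Periodic (· ∈ B) c) (hAB : Disjoint A B)
    (hAne : A.Nonempty) (hBne : B.Nonempty) (hΓA : ∀ u ∈ Γ, ∀ x, u x ∈ A ↔ x ∈ A)
    (hΓB : ∀ u ∈ Γ, ∀ x, u x ∈ B ↔ x ∈ B) : ∃ p, CommutesAt Γ p := by
  obtain ⟨p, hp⟩ := exitPoints_nonempty hc hA hBc hAB hAne hBne
  exact ⟨p, fun u hu v hv => map_map_comm_of_mem_exitPoints
    (f := CircleDeg1Lift.toOrderIso u) (g := CircleDeg1Lift.toOrderIso v) hc hA hB hAc hBc hAB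
    (hΓA u hu) (hΓB u hu) (hΓA v hv) (hΓB v hv) hp⟩

lemma iInter_nonempty_of_not_commutesAt {ι : Type*} {F : ι → Set ℝ} {c : ℝ} (hc : 0 < c)
    (hΓ : ¬∃ p, CommutesAt Γ p) (hF : ∀ i, IsClosed (F i)) (hFc : ∀ i, Periodic (· ∈ F i) c)
    (hFne : ∀ i, (F i).Nonempty) (hΓF : ∀ i, ∀ u ∈ Γ, ∀ x, u x ∈ F i ↔ x ∈ F i) :
    (⋂ i, F i).Nonempty := by
  classical
  refine iInter_nonempty_of_periodic hc hF hFc fun s => ?_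
  induction s using Finset.induction_on with
  | empty => simp
  | insert i s _ ih =>
    rw [Finset.set_biInter_insert]
    by_contra hempty
    refine hΓ (exists_commutesAt_of_disjoint hc (hF i) (isClosed_biInter fun j _ => hF j) (hFc i)
      (fun x => ?_) (disjoint_iff_inter_eq_empty.2 (not_nonempty_iff_eq_empty.1 hempty)) (hFne i)
      ih (hΓF i) fun u hu x => ?_)
    · simp only [mem_iInter, fun j => (hFc j x).to_iff]
    · simp only [mem_iInter, fun j => hΓF j u hu x]

theorem exists_commutesAt_or_exists_commutesAt (hcomm : ∀ u ∈ Γ, ∀ v ∈ Λ, Commute u v) :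
    (∃ p, CommutesAt Γ p) ∨ ∃ p, CommutesAt Λ p := by
  refine or_iff_not_imp_left.2 fun hΓ => ?_
  obtain ⟨x₀, hx₀⟩ := iInter_nonempty_of_not_commutesAt one_pos hΓ
    (F := fun v : {v // v ∈ Λ ∧ ∃ x, v x = x} => fixedPoints v.1)
    (fun v => isClosed_fixedPoints_coe_units v.1) (fun v => periodic_mem_fixedPoints v.1)
    (fun v => v.2.2) fun v u hu => mem_fixedPoints_iff_of_commute (hcomm u hu v.1 v.2.1)
  have huniv : IsUniversalFixedPt Λ x₀ := fun v hv hfix => mem_iInter.1 hx₀ ⟨v, hv, hfix⟩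
  exact ⟨x₀, huniv.commutesAt⟩

end Dichotomy

section Projection

open CircleDeg1Lift

/-- The self-map of the circle induced by a degree one lift. -/
def circleMap : CircleDeg1Lift →* Function.End 𝕊 where
  toFun f := Function.Periodic.lift (f := fun x => (f x : 𝕊)) (c := 1) fun x =>
    (congrArg _ (f.map_add_one x)).trans (AddCircle.coe_add_period 1 (f x))
  map_one' := funext fun x => QuotientAddGroup.induction_on x fun _ => rfl
  map_mul' _ _ := funext fun x => QuotientAddGroup.induction_on x fun _ => rfl

/-- The homeomorphism of the circle induced by an invertible degree one lift. -/
def circlePerm : CircleDeg1Liftˣ →* Equiv.Perm 𝕊 :=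
  Equiv.Perm.equivUnitsEnd.symm.toMonoidHom.comp (Units.map circleMap)

lemma circlePerm_eq_iff {u : CircleDeg1Liftˣ} {f : Equiv.Perm 𝕊} :
    circlePerm u = f ↔ ∀ x : ℝ, f (x : 𝕊) = (u x : ℝ) :=
  ⟨fun h _ => h ▸ rfl,
    fun h => Equiv.ext fun x => QuotientAddGroup.induction_on x fun x => (h x).symm⟩

lemma exists_circlePerm_eq_of_isOPLift {f : Equiv.Perm 𝕊} {F : ℝ → ℝ} (h : IsOPLift f F) :
    ∃ u : CircleDeg1Liftˣ, circlePerm u = f ∧ ⇑u = F := by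
  obtain ⟨hcont, hmono, hadd, hlift⟩ := h
  let φ : CircleDeg1Lift := ⟨⟨F, hmono.monotone⟩, hadd⟩
  obtain ⟨u, hu⟩ := φ.isUnit_iff_bijective.2
    ⟨hmono.injective, φ.continuous_iff_surjective.1 hcont⟩
  have huF : ⇑u = F := congrArg DFunLike.coe hu
  exact ⟨u, circlePerm_eq_iff.2 fun x => by rw [hlift, huF], huF⟩

lemma isOPHomeo_of_isC1Diffeo {f : Equiv.Perm 𝕊} (h : IsC1Diffeo f) : IsOPHomeo f :=
  h.imp fun _ hF => hF.1

lemma mem_range_circlePerm_of_isOPHomeo {f : Equiv.Perm 𝕊} (h : IsOPHomeo f) :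
    f ∈ circlePerm.range :=
  let ⟨_, hF⟩ := h
  let ⟨u, hu, _⟩ := exists_circlePerm_eq_of_isOPLift hF
  ⟨u, hu⟩

/-- The translation of the line by an integer; these are the lifts of the identity of the circle. -/
def intTranslate (k : ℤ) : CircleDeg1Liftˣ := CircleDeg1Lift.translate (.ofAdd (k : ℝ))

lemma intTranslate_apply (k : ℤ) (x : ℝ) : intTranslate k x = k + x := rfl

lemma intTranslate_zero : intTranslate 0 = 1 := by
  rw [intTranslate, Int.cast_zero, ofAdd_zero, map_one]

lemma circlePerm_intTranslate (k : ℤ) : circlePerm (intTranslate k) = 1 := by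
  refine circlePerm_eq_iff.2 fun x => ?_
  have hk : ((k : ℝ) : 𝕊) = 0 := AddCircle.coe_eq_zero_iff (1 : ℝ) |>.2 ⟨k, by simp⟩
  rw [intTranslate_apply, AddCircle.coe_add, hk, zero_add, Equiv.Perm.one_apply]

lemma exists_int_of_coe_eq_coe {x y : ℝ} (h : (x : 𝕊) = y) : ∃ k : ℤ, x = k + y := by
  obtain ⟨k, hk⟩ := (AddCircle.coe_eq_zero_iff (1 : ℝ)).1
    (show ((x - y : ℝ) : 𝕊) = 0 by rw [AddCircle.coe_sub, h, sub_self])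
  exact ⟨k, by rw [zsmul_one] at hk; rw [hk, sub_add_cancel]⟩

lemma exists_eq_intTranslate_of_circlePerm_eq_one {u : CircleDeg1Liftˣ} (hu : circlePerm u = 1) :
    ∃ k : ℤ, u = intTranslate k := by
  choose n hn using fun x : ℝ => exists_int_of_coe_eq_coe (circlePerm_eq_iff.1 hu x).symm
  have hcont : Continuous n := by
    refine Int.isClosedEmbedding_coe_real.isInducing.continuous_iff.2 ?_
    have hn' : (Int.cast : ℤ → ℝ) ∘ n = fun x => u x - x :=
      funext fun x => eq_sub_of_add_eq (hn x).symm
    exact hn' ▸ (continuous_coe_units u).sub continuous_id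
  refine ⟨n 0, Units.ext (CircleDeg1Lift.ext fun x => ?_)⟩
  rw [intTranslate_apply, PreconnectedSpace.constant inferInstance hcont (x := 0) (y := x)]
  exact hn x

lemma exists_eq_mul_intTranslate_of_circlePerm_eq {u v : CircleDeg1Liftˣ}
    (h : circlePerm u = circlePerm v) : ∃ k : ℤ, u = v * intTranslate k := by
  obtain ⟨k, hk⟩ := exists_eq_intTranslate_of_circlePerm_eq_one (u := v⁻¹ * u)
    (by rw [map_mul, map_inv, h, inv_mul_cancel])
  exact ⟨k, inv_mul_eq_iff_eq_mul.1 hk⟩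

lemma translationNumber_mul_intTranslate (f : CircleDeg1Lift) (k : ℤ) :
    translationNumber (f * intTranslate k) = translationNumber f + k := by
  have hcomm : Commute f (intTranslate k) :=
    CircleDeg1Lift.ext fun x => f.map_int_add k x
  rw [translationNumber_mul_of_commute hcomm, intTranslate, translationNumber_translate]

lemma commute_of_commute_circlePerm {u v : CircleDeg1Liftˣ}
    (h : Commute (circlePerm u) (circlePerm v)) : Commute u v := by
  obtain ⟨k, hk⟩ := exists_eq_mul_intTranslate_of_circlePerm_eq
    (u := u * v) (v := v * u) (by rw [map_mul, map_mul, h.eq])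
  have hconj : translationNumber (u * v : CircleDeg1Lift) = translationNumber (v * u) := by
    rw [← translationNumber_conj_eq u (v * u), ← mul_assoc, Units.mul_inv_cancel_right]
  have hk0 : k = 0 := by
    rw [← Units.val_mul, hk, Units.val_mul, translationNumber_mul_intTranslate] at hconj
    exact Int.cast_eq_zero.1 (add_eq_left.1 hconj)
  rw [hk0, intTranslate_zero, mul_one] at hk
  exact hk

lemma contDiff_of_isC1Diffeo_circlePerm {u : CircleDeg1Liftˣ} (hu : IsC1Diffeo (circlePerm u)) :
    ContDiff ℝ 1 u := by
  obtain ⟨F, hF, hC, -⟩ := hu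
  obtain ⟨v, hvu, rfl⟩ := exists_circlePerm_eq_of_isOPLift hF
  obtain ⟨k, rfl⟩ := exists_eq_mul_intTranslate_of_circlePerm_eq hvu.symm
  exact hC.comp (contDiff_const.add contDiff_id)

lemma existsUnique_lift_apply_eq {f : Equiv.Perm 𝕊} (hf : f ∈ circlePerm.range) {p : ℝ}
    (hp : f (p : 𝕊) = p) : ∃! u : CircleDeg1Liftˣ, circlePerm u = f ∧ u p = p := by
  obtain ⟨v, rfl⟩ := hf
  obtain ⟨k, hk⟩ := exists_int_of_coe_eq_coe hp
  have hkv : (v * intTranslate (-k)) p = p := by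
    rw [Units.val_mul, mul_apply, intTranslate_apply, map_int_add, hk, Int.cast_neg,
      neg_add_cancel_left]
  refine ⟨v * intTranslate (-k), ⟨?_, hkv⟩, ?_⟩
  · rw [map_mul, circlePerm_intTranslate, mul_one]
  · rintro u ⟨huv, hup⟩
    obtain ⟨l, rfl⟩ := exists_eq_mul_intTranslate_of_circlePerm_eq huv
    have hlk : l = -k := by
      rw [Units.val_mul, mul_apply, intTranslate_apply, map_int_add] at hup hkv
      exact Int.cast_injective (add_right_cancel (hup.trans hkv.symm))
    rw [hlk]

theorem exists_lift_of_apply_eq {L : Type*} [Group L] {ρ : L →* Equiv.Perm 𝕊}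
    (hρ : ∀ g, ρ g ∈ circlePerm.range) {p : ℝ} (hp : ∀ g, ρ g (p : 𝕊) = p) :
    ∃ A : L →* CircleDeg1Liftˣ, circlePerm.comp A = ρ ∧ ∀ g, A g p = p := by
  choose A hA huniq using fun g => existsUnique_lift_apply_eq (hρ g) (hp g)
  refine ⟨MonoidHom.mk' A fun g h => (huniq (g * h) _ ⟨?_, ?_⟩).symm,
    MonoidHom.ext fun g => (hA g).1, fun g => (hA g).2⟩
  · rw [map_mul, map_mul, (hA g).1, (hA h).1]
  · rw [Units.val_mul, mul_apply, (hA h).2, (hA g).2]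

theorem eq_one_of_isC1Diffeo_of_apply_eq {L : Type*} [Group L] [Group.FG L]
    (hL : ∀ φ : L →* Multiplicative ℝ, φ = 1) {ρ : L →* Equiv.Perm 𝕊}
    (hρ : ∀ g, IsC1Diffeo (ρ g)) {p : ℝ} (hp : ∀ g, ρ g (p : 𝕊) = p) : ρ = 1 := by
  obtain ⟨A, rfl, hAp⟩ := exists_lift_of_apply_eq
    (fun g => mem_range_circlePerm_of_isOPHomeo (isOPHomeo_of_isC1Diffeo (hρ g))) hp
  let _ : MulAction L ℝ := MulAction.compHom ℝ (toOrderIso.comp A)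
  have hfix := fixedPoints_eq_univ_of_contDiff hL (fun g => (strictMono_coe_units (A g)).monotone)
    (fun g => contDiff_of_isC1Diffeo_circlePerm (hρ g)) ⟨p, hAp⟩
  refine MonoidHom.ext fun g => circlePerm_eq_iff.2 fun x => ?_
  have hx : x ∈ MulAction.fixedPoints L ℝ := hfix ▸ Set.mem_univ x
  exact congrArg ((↑) : ℝ → 𝕊) (hx g).symm

end Projection

section FiniteSubgroups

open CircleDeg1Lift

lemma eq_one_of_pow_eq_intTranslate {u : CircleDeg1Liftˣ} {n : ℕ} (hn : 0 < n) {k : ℤ}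
    (hu : u ^ n = intTranslate k) {x : ℝ} (hx : u x = x) : u = 1 := by
  have hpow (y : ℝ) : u^[n] y = k + y := by
    rw [← coe_pow, ← Units.val_pow_eq_pow_val, hu, intTranslate_apply]
  have hk : (k : ℝ) = 0 := add_eq_right.1 ((hpow x).symm.trans (Function.iterate_fixed hx n))
  refine Units.ext (CircleDeg1Lift.ext fun y => ?_)
  have h := (iterate_pos_eq_iff (u : CircleDeg1Lift) (x := y) (m := 0) hn).1 (by
    rw [hpow, hk, zero_add, Int.cast_zero, mul_zero, add_zero])
  rwa [Int.cast_zero, add_zero] at h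

variable {R : Subgroup (Equiv.Perm 𝕊)}

lemma exists_pow_card_eq_intTranslate {u : CircleDeg1Liftˣ} (hu : u ∈ R.comap circlePerm) :
    ∃ k : ℤ, u ^ Nat.card R = intTranslate k := by
  refine exists_eq_intTranslate_of_circlePerm_eq_one ?_
  rw [map_pow]
  exact congrArg Subtype.val (pow_card_eq_one' (x := (⟨circlePerm u, hu⟩ : R)))

variable [Finite R]

lemma isUniversalFixedPt_comap_circlePerm (x₀ : ℝ) :
    IsUniversalFixedPt (R.comap circlePerm) x₀ := by
  rintro u hu ⟨x, hx⟩
  obtain ⟨k, hk⟩ := exists_pow_card_eq_intTranslate hu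
  rw [eq_one_of_pow_eq_intTranslate Nat.card_pos hk hx, Units.val_one, coe_one, id]

lemma isCyclic_comap_circlePerm : IsCyclic (R.comap circlePerm) := by
  choose k hk using fun u : R.comap circlePerm => exists_pow_card_eq_intTranslate u.2
  have hk_eq (u : R.comap circlePerm) : (k u : ℝ) = Nat.card R * translationNumber u.1 := by
    rw [← translationNumber_pow, ← Units.val_pow_eq_pow_val, hk, intTranslate,
      translationNumber_translate]
  let φ : R.comap circlePerm →* Multiplicative ℤ :=
    MonoidHom.mk' (fun u => .ofAdd (k u)) fun u v => by
      have hadd : k (u * v) = k u + k v := by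
        apply Int.cast_injective (α := ℝ)
        rw [Int.cast_add, hk_eq, hk_eq, hk_eq, ← mul_add]
        exact congrArg _ ((isUniversalFixedPt_comap_circlePerm 0).translationNumber_mul u.2 v.2)
      rw [hadd, ofAdd_add]
  refine isCyclic_of_injective φ ((injective_iff_map_eq_one φ).2 fun u hu => ?_)
  have hku : k u = 0 := hu
  have hτ : translationNumber u.1 = 0 := by
    have h := hk_eq u
    rw [hku, Int.cast_zero, eq_comm] at h
    exact (mul_eq_zero.1 h).resolve_left (Nat.cast_ne_zero.2 Nat.card_pos.ne')
  exact Subtype.ext (eq_one_of_pow_eq_intTranslate Nat.card_pos (hk u)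
    ((isUniversalFixedPt_comap_circlePerm 0).apply_eq_of_translationNumber_eq_zero u.2 hτ))

theorem isCyclic_of_finite_of_le_range (hR : R ≤ circlePerm.range) : IsCyclic R := by
  have := isCyclic_comap_circlePerm (R := R)
  refine isCyclic_of_surjective (circlePerm.subgroupComap R) fun f => ?_
  obtain ⟨u, hu⟩ := hR f.2
  exact ⟨⟨u, Subgroup.mem_comap.2 (hu ▸ f.2)⟩, Subtype.ext hu⟩

end FiniteSubgroups

section FiniteCyclicImage

open scoped commutatorElement

variable {G : Type*} [Group G]

lemma commutator_apply_eq_of_commutesAt {ρ : G →* Equiv.Perm 𝕊}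
    (hρ : ∀ g, IsOPHomeo (ρ g)) {p : ℝ} (hp : CommutesAt (ρ.range.comap circlePerm) p) {g : G}
    (hg : g ∈ commutator G) : ρ g (p : 𝕊) = p := by
  suffices h : commutator G ≤ (MulAction.stabilizer (Equiv.Perm 𝕊) (p : 𝕊)).comap ρ from h hg
  refine Subgroup.commutator_le.2 fun g _ h _ => ?_
  obtain ⟨u, hu⟩ := mem_range_circlePerm_of_isOPHomeo (hρ g⁻¹)
  obtain ⟨v, hv⟩ := mem_range_circlePerm_of_isOPHomeo (hρ h⁻¹)
  have hcomm : ρ (g⁻¹ * h⁻¹) (p : 𝕊) = ρ (h⁻¹ * g⁻¹) (p : 𝕊) := by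
    rw [map_mul, map_mul, ← hu, ← hv]
    exact congrArg ((↑) : ℝ → 𝕊) (hp u ⟨g⁻¹, hu.symm⟩ v ⟨h⁻¹, hv.symm⟩)
  have hdecomp : ⁅g, h⁆ = (h⁻¹ * g⁻¹)⁻¹ * (g⁻¹ * h⁻¹) := by
    rw [commutatorElement_def]
    group
  rw [Subgroup.mem_comap, MulAction.mem_stabilizer_iff, hdecomp, map_mul, map_inv, mul_smul,
    inv_smul_eq_iff]
  exact hcomm

theorem finite_and_isCyclic_range_of_commutesAt [Group.FG G]
    (hG : ∀ φ : G →* Multiplicative ℝ, φ = 1)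
    (hG' : ∀ φ : ↥(commutator G) →* Multiplicative ℝ, φ = 1) {ρ : G →* Equiv.Perm 𝕊}
    (hρ : ∀ g, IsOPHomeo (ρ g)) (hρ' : ∀ g ∈ commutator G, IsC1Diffeo (ρ g))
    (hp : ∃ p, CommutesAt (ρ.range.comap circlePerm) p) :
    Finite ρ.range ∧ IsCyclic ρ.range := by
  obtain ⟨p, hp⟩ := hp
  have : Finite (G ⧸ commutator G) := finite_abelianization_of_forall_hom_real_eq_one hG
  have : (commutator G).FiniteIndex := Subgroup.finiteIndex_of_finite_quotient
  have htriv : ρ.comp (commutator G).subtype = 1 := eq_one_of_isC1Diffeo_of_apply_eq hG'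
    (fun g => hρ' g g.2) fun g => commutator_apply_eq_of_commutesAt hρ hp g.2
  have hker : commutator G ≤ ρ.ker := fun g hg =>
    MonoidHom.mem_ker.2 (DFunLike.congr_fun htriv (⟨g, hg⟩ : commutator G))
  have hfin : Finite ρ.range := by
    have : ρ.ker.FiniteIndex := Subgroup.finiteIndex_of_le hker
    exact Finite.of_equiv _ (QuotientGroup.quotientKerEquivRange ρ).toEquiv
  refine ⟨hfin, isCyclic_of_finite_of_le_range ?_⟩
  rintro _ ⟨g, rfl⟩
  exact mem_range_circlePerm_of_isOPHomeo (hρ g)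

end FiniteCyclicImage

end CircleAction

open CircleAction in
theorem product_action_factors_through_finite_cyclic_general
    (H G : Type*) [Group H] [Group G] [Group.FG H] [Group.FG G]
    (hH : ∀ φ : H →* Multiplicative ℝ, φ = 1)
    (hH' : ∀ φ : ↥(commutator H) →* Multiplicative ℝ, φ = 1)
    (hG : ∀ φ : G →* Multiplicative ℝ, φ = 1)
    (hG' : ∀ φ : ↥(commutator G) →* Multiplicative ℝ, φ = 1)
    (ρ : H × G →* Equiv.Perm 𝕊) (hρ : ∀ g, IsOPHomeo (ρ g))
    (hρ' : ∀ g ∈ commutator (H × G), IsC1Diffeo (ρ g)) :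
    (Finite (ρ.comp (MonoidHom.inl H G)).range ∧ IsCyclic (ρ.comp (MonoidHom.inl H G)).range) ∨
      (Finite (ρ.comp (MonoidHom.inr H G)).range ∧ IsCyclic (ρ.comp (MonoidHom.inr H G)).range) :=
  have hcomm : ∀ u ∈ (ρ.comp (MonoidHom.inl H G)).range.comap circlePerm,
      ∀ v ∈ (ρ.comp (MonoidHom.inr H G)).range.comap circlePerm, Commute u v := by
    rintro u ⟨h, hu⟩ v ⟨g, hv⟩
    refine commute_of_commute_circlePerm ?_
    rw [← hu, ← hv]
    exact (MonoidHom.commute_inl_inr h g).map ρ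
  (exists_commutesAt_or_exists_commutesAt hcomm).imp
    (finite_and_isCyclic_range_of_commutesAt hH hH' (fun _ => hρ _)
      fun _ hh => hρ' _ (map_mem_commutator _ hh))
    (finite_and_isCyclic_range_of_commutesAt hG hG' (fun _ => hρ _)
      fun _ hg => hρ' _ (map_mem_commutator _ hg))

/-- If `H` and `G` are finitely generated groups all of whose
homomorphisms (and all of whose commutator subgroups' homomorphisms) into `(ℝ, +)` are
trivial, then for any orientation preserving `C¹` action of `H × G` on the circle, the
induced action of either `H × 1` or `1 × G` factors through a finite cyclic group: the
image of at least one of the two factors is a finite cyclic group. -/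
theorem product_action_factors_through_finite_cyclic
    (H G : Type*) [Group H] [Group G] [Group.FG H] [Group.FG G]
    (hH : ∀ φ : H →* Multiplicative ℝ, φ = 1)
    (hH' : ∀ φ : ↥(commutator H) →* Multiplicative ℝ, φ = 1)
    (hG : ∀ φ : G →* Multiplicative ℝ, φ = 1)
    (hG' : ∀ φ : ↥(commutator G) →* Multiplicative ℝ, φ = 1)
    (ρ : H × G →* Equiv.Perm 𝕊) (hρ : ∀ g : H × G, IsC1Diffeo (ρ g)) :
    (Finite (ρ.comp (MonoidHom.inl H G)).range ∧ IsCyclic (ρ.comp (MonoidHom.inl H G)).range) ∨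
      (Finite (ρ.comp (MonoidHom.inr H G)).range ∧ IsCyclic (ρ.comp (MonoidHom.inr H G)).range) :=
  product_action_factors_through_finite_cyclic_general H G hH hH' hG hG' ρ
    (fun g => CircleAction.isOPHomeo_of_isC1Diffeo (hρ g)) fun g _ => hρ g
end
end

section
/- Let n ≥ 8 and let Γ be a finite index subgroup of Aut(F_n) that contains the subgroup IA_n of IA-automorphisms. Then any orientation preserving C^1 action of Γ on the circle cannot be faithful; that is, every group homomorphism Γ → Diff^1_+(S^1) has nontrivial kernel. -/
noncomputable section

open MeasureTheory

/-- The free group of rank `n`. -/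
abbrev FreeGrp (n : ℕ) : Type := FreeGroup (Fin n)

/-- The automorphism group `Aut(Fₙ)`. -/
abbrev AutF (n : ℕ) : Type := MulAut (FreeGrp n)

/-- The subgroup `IAₙ ≤ Aut(Fₙ)` of automorphisms acting trivially on the abelianization
`Fₙ^{ab} ≅ ℤⁿ`, i.e. the kernel of the natural map `Aut(Fₙ) → Aut(ℤⁿ)`. -/
def IA (n : ℕ) : Subgroup (AutF n) where
  carrier := {e | ∀ x : FreeGrp n, Abelianization.of (e x) = Abelianization.of x}
  one_mem' := fun _ => rfl
  mul_mem' := by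
    intro a b ha hb x
    have h : (a * b) x = a (b x) := rfl
    rw [h, ha (b x), hb x]
  inv_mem' := by
    intro a ha x
    have h := ha (a⁻¹ x)
    have h' : a (a⁻¹ x) = x := a.apply_symm_apply x
    rw [h'] at h
    exact h.symm

/-!
Suppose a faithful action exists. As `n ≥ 8`, two disjoint sets of four letters give two commuting
copies of finite index subgroups of `Aut(F₄)` containing `IA₄`, acting faithfully on the circle.

*Circle dynamics.* Let `G` and `H` be commuting groups of lifts of circle homeomorphisms, both
containing the integer translations. If two nonempty closed `G`-invariant sets `C` and `K` are
disjoint, the points of `K` immediately below points of `C` form a uniformly separated invariant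
set, on which `G` acts through translations of `ℤ`; hence `⁅G, G⁆` has a global fixed point.
Otherwise there is a unique minimal `G`-invariant set; each element of `H` preserves it, and
displaces all its points in the same direction or none, so Hölder's argument makes the translation
number additive on `H` and `⁅H, H⁆` fixes every point of this set.

*Rigidity.* By Thurston's stability theorem, a finitely generated group without nonzero
homomorphisms to `ℝ` acting on the line by `C¹` diffeomorphisms with a global fixed point acts
trivially.

*Algebra.* In each copy, the commutator subgroup contains a nontrivial finitely generated group
without nonzero homomorphisms to `ℝ`, generated by transvections. On the transvections of a fixed
letter by words in two other letters, such a homomorphism is invariant under conjugating the word;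
the transfer to the free group on those two letters then forces it to vanish.
-/

section ThurstonStability

open Filter Topology Asymptotics

theorem isLittleO_displacement_comp {f g : ℝ → ℝ} {p : ℝ} (hf : HasStrictDerivAt f 1 p)
    (hg : ContinuousAt g p) (hgp : g p = p) :
    (fun x => (f (g x) - x) - (f x - x) - (g x - x)) =o[𝓝 p] fun x => g x - x := by
  have hpair : Tendsto (fun x => (g x, x)) (𝓝 p) (𝓝 (p, p)) := by
    simpa only [hgp, id_eq] using (hg.prodMk continuousAt_id).tendsto
  refine (hf.isLittleO.comp_tendsto hpair).congr_left fun x => ?_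
  simp

variable {Q X : Type*} [Group Q] {l : Filter X} {δ : Q → X → ℝ}

theorem isBigO_of_isBigO_generators
    (hδ : ∀ a b, (fun x => δ (a * b) x - δ a x - δ b x) =o[l] δ b) (hone : δ 1 = 0)
    {S : Set Q} (hS : Subgroup.closure S = ⊤) {D : X → ℝ} (hD : ∀ s ∈ S, δ s =O[l] D) (q : Q) :
    δ q =O[l] D := by
  have hq : q ∈ Subgroup.closure S := hS ▸ Subgroup.mem_top q
  induction hq using Subgroup.closure_induction with
  | mem s hs => exact hD s hs
  | one => exact hone ▸ isBigO_zero _ _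
  | mul a b _ _ ha hb =>
    refine (((hδ a b).isBigO.trans hb).add (ha.add hb)).congr_left fun x => ?_
    ring
  | inv a _ ha =>
    refine (((hδ a⁻¹ a).isBigO.trans ha).add ha).neg_left.congr_left fun x => ?_
    rw [inv_mul_cancel, hone, Pi.zero_apply]
    ring

theorem exists_tendsto_div_of_isBigO {U : Ultrafilter X} {f D : X → ℝ} (h : f =O[U] D) :
    ∃ c, Tendsto (fun x => f x / D x) U (𝓝 c) := by
  obtain ⟨C, hC⟩ := h.bound
  have hmem : ∀ᶠ x in (U : Filter X), f x / D x ∈ Metric.closedBall (0 : ℝ) (max C 0) := by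
    filter_upwards [hC] with x hx
    rw [mem_closedBall_zero_iff, norm_div]
    exact div_le_of_le_mul₀ (norm_nonneg _) (le_max_right _ _)
      (hx.trans (mul_le_mul_of_nonneg_right (le_max_left _ _) (norm_nonneg _)))
  obtain ⟨c, -, hc⟩ := (isCompact_closedBall (0 : ℝ) (max C 0)).ultrafilter_le_nhds
    (U.map fun x => f x / D x) (le_principal_iff.2 hmem)
  exact ⟨c, hc⟩

/-- The character is the limit of `δ q / δ s₀`, where the generator `s₀` has the largest
displacement near the ultrafilter. -/
theorem exists_character_ne_one [l.NeBot]
    (hδ : ∀ a b, (fun x => δ (a * b) x - δ a x - δ b x) =o[l] δ b) (hone : δ 1 = 0)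
    {S : Set Q} (hSfin : S.Finite) (hS : Subgroup.closure S = ⊤)
    (hmove : ∀ᶠ x in l, ∃ s ∈ S, δ s x ≠ 0) :
    ∃ φ : Q →* Multiplicative ℝ, φ ≠ 1 := by
  let U := Ultrafilter.of l
  have hU : (U : Filter X) ≤ l := Ultrafilter.of_le l
  have hmax : ∀ᶠ x in (U : Filter X), ∃ s ∈ S, δ s x ≠ 0 ∧ ∀ t ∈ S, ‖δ t x‖ ≤ ‖δ s x‖ := by
    filter_upwards [hU hmove] with x hx
    obtain ⟨r, hrS, hr⟩ := hx
    obtain ⟨s, hsS, hs⟩ := hSfin.exists_maximalFor (fun s => ‖δ s x‖) S ⟨r, hrS⟩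
    have hle : ∀ t ∈ S, ‖δ t x‖ ≤ ‖δ s x‖ := fun t ht => (le_total _ _).elim id (hs ht)
    exact ⟨s, hsS, norm_pos_iff.1 ((norm_pos_iff.2 hr).trans_le (hle r hrS)), hle⟩
  obtain ⟨s, -, hs⟩ := (Ultrafilter.eventually_exists_mem_iff hSfin).1 hmax
  have hO : ∀ q, δ q =O[U] δ s :=
    isBigO_of_isBigO_generators (fun a b => (hδ a b).mono hU) hone hS fun t ht =>
      IsBigO.of_bound 1 <| by simpa only [one_mul] using hs.mono fun x hx => hx.2 t ht
  choose c hc using fun q => exists_tendsto_div_of_isBigO (hO q)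
  have hadd (a b : Q) : c (a * b) = c a + c b := by
    have hzero := (((hδ a b).mono hU).trans_isBigO (hO b)).tendsto_div_nhds_zero
    have hdiff := ((hc (a * b)).sub (hc a)).sub (hc b)
    simp only [← sub_div] at hdiff
    linarith [tendsto_nhds_unique hzero hdiff]
  have hcs : c s = 1 := tendsto_nhds_unique (hc s) <| tendsto_const_nhds.congr' <| by
    filter_upwards [hs] with x hx using (div_self hx.1).symm
  refine ⟨MonoidHom.mk' (fun q => Multiplicative.ofAdd (c q)) fun a b => by
    rw [hadd, ofAdd_add], fun h => one_ne_zero (α := ℝ) ?_⟩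
  rw [← hcs]
  exact congrArg Multiplicative.toAdd (DFunLike.congr_fun h s)

variable [Subsingleton (Q →* Multiplicative ℝ)] (f : Q →* (ℝ ≃o ℝ))

theorem deriv_eq_one_of_fixed (hf : ∀ q, Differentiable ℝ (f q)) {p : ℝ}
    (hp : ∀ q, f q p = p) (q : Q) : deriv (f q) p = 1 := by
  have hmul (a b : Q) : deriv (f (a * b)) p = deriv (f a) p * deriv (f b) p := by
    have hcomp : (f (a * b) : ℝ → ℝ) = f a ∘ f b := by rw [map_mul]; rfl
    rw [hcomp, deriv_comp _ (hf a _) (hf b _), hp b]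
  have hone : deriv (f 1) p = 1 := by
    have hid : (f 1 : ℝ → ℝ) = id := by rw [map_one]; rfl
    rw [hid, deriv_id]
  have hpos (a : Q) : 0 < deriv (f a) p := by
    refine (f a).monotone.deriv_nonneg.lt_of_ne' fun h => ?_
    simpa [h, hone] using hmul a a⁻¹
  let logDeriv : Q →* Multiplicative ℝ :=
    MonoidHom.mk' (fun a => Multiplicative.ofAdd (Real.log (deriv (f a) p))) fun a b => by
      rw [hmul, Real.log_mul (hpos a).ne' (hpos b).ne', ofAdd_add]
  have htriv : logDeriv q = 1 := by rw [Subsingleton.elim logDeriv 1, MonoidHom.one_apply]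
  exact Real.eq_one_of_pos_of_log_eq_zero (hpos q) (congrArg Multiplicative.toAdd htriv)

theorem thurston_stability [Group.FG Q] (hf : ∀ q, ContDiff ℝ 1 (f q)) {x₀ : ℝ}
    (hx₀ : ∀ q, f q x₀ = x₀) : f = 1 := by
  let Z : Set ℝ := {x | ∀ q, f q x = x}
  have hZclosed : IsClosed Z := by
    rw [show Z = ⋂ q, {x | f q x = x} by ext; simp [Z]]
    exact isClosed_iInter fun q => isClosed_eq (hf q).continuous continuous_id
  by_contra hne
  have hZ : Z ≠ Set.univ := fun h => hne <| MonoidHom.ext fun q => OrderIso.ext <| funext fun x =>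
    (h ▸ Set.mem_univ x : x ∈ Z) q
  obtain ⟨p, hpfrontier⟩ : (frontier Z).Nonempty := nonempty_frontier_iff.2 ⟨⟨x₀, hx₀⟩, hZ⟩
  have hp : p ∈ Z := hZclosed.frontier_subset hpfrontier
  have : (𝓝[Zᶜ] p).NeBot := mem_closure_iff_nhdsWithin_neBot.1 <| by
    rw [frontier_eq_closure_inter_closure] at hpfrontier
    exact hpfrontier.2
  obtain ⟨S, hS, hSfin⟩ := Group.fg_iff.1 ‹Group.FG Q›
  have hmove (x : ℝ) (hx : x ∈ Zᶜ) : ∃ s ∈ S, f s x - x ≠ 0 := by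
    by_contra! hfix
    have hle : Subgroup.closure S ≤ (MulAction.stabilizer (ℝ ≃o ℝ) x).comap f :=
      (Subgroup.closure_le _).2 fun s hs => sub_eq_zero.1 (hfix s hs)
    exact hx fun q => hle (hS ▸ Subgroup.mem_top q)
  have hδ (a b : Q) : (fun x => (f (a * b) x - x) - (f a x - x) - (f b x - x))
      =o[𝓝[Zᶜ] p] fun x => f b x - x := by
    have hstrict := (hf a).hasStrictDerivAt (x := p) one_ne_zero
    rw [deriv_eq_one_of_fixed f (fun q => (hf q).differentiable one_ne_zero) hp] at hstrict
    rw [map_mul]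
    exact (isLittleO_displacement_comp hstrict (hf b).continuous.continuousAt (hp b)).mono
      nhdsWithin_le_nhds
  obtain ⟨φ, hφ⟩ := exists_character_ne_one (δ := fun q x => f q x - x) hδ
    (by funext x; rw [map_one]; exact sub_self x) hSfin hS (eventually_nhdsWithin_of_forall hmove)
  exact hφ (Subsingleton.elim φ 1)

end ThurstonStability

section CommutingCircleActions

open CircleDeg1Lift Set
open scoped commutatorElement

theorem dist_map_sub_self_translationNumber_le (f : CircleDeg1Lift) (x : ℝ) :
    dist (f x - x) (translationNumber f) ≤ 1 := by
  have h := (↑(translate (Multiplicative.ofAdd x))⁻¹ * f *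
    translate (Multiplicative.ofAdd x)).dist_map_zero_translationNumber_le
  rw [translationNumber_conj_eq', mul_apply, mul_apply, translate_inv_apply, translate_apply,
    add_zero, neg_add_eq_sub] at h
  exact h

theorem abs_pow_map_sub_self_sub_translationNumber_le (f : CircleDeg1Lift) (n : ℕ) (x : ℝ) :
    |(f ^ n) x - x - n * translationNumber f| ≤ 1 := by
  rw [← translationNumber_pow, ← Real.dist_eq]
  exact dist_map_sub_self_translationNumber_le (f ^ n) x

section

variable {f g : CircleDeg1Lift} {K : Set ℝ}

theorem mapsTo_pow (hf : MapsTo f K K) (n : ℕ) : MapsTo (f ^ n : CircleDeg1Lift) K K := by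
  rw [coe_pow]
  exact hf.iterate n

theorem pow_map_map_le (hf : MapsTo f K K) (hle : ∀ x ∈ K, f (g x) ≤ g (f x)) (n : ℕ) {x : ℝ}
    (hx : x ∈ K) : (f ^ n) (g x) ≤ g ((f ^ n) x) := by
  induction n with
  | zero => exact le_rfl
  | succ n ih =>
    rw [pow_succ', mul_apply, mul_apply]
    exact (f.monotone ih).trans (hle _ (mapsTo_pow hf n hx))

theorem map_pow_map_le (hg : MapsTo g K K) (hle : ∀ x ∈ K, f (g x) ≤ g (f x)) (n : ℕ) {x : ℝ}
    (hx : x ∈ K) : f ((g ^ n) x) ≤ (g ^ n) (f x) := by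
  induction n with
  | zero => exact le_rfl
  | succ n ih =>
    rw [pow_succ', mul_apply, mul_apply]
    exact (hle _ (mapsTo_pow hg n hx)).trans (g.monotone ih)

variable (hf : MapsTo f K K) (hg : MapsTo g K K) (hle : ∀ x ∈ K, f (g x) ≤ g (f x))

include hf hg hle

theorem pow_map_pow_le_mul_pow (n : ℕ) {x : ℝ} (hx : x ∈ K) :
    (f ^ n) ((g ^ n) x) ≤ ((f * g) ^ n) x := by
  induction n with
  | zero => exact le_rfl
  | succ n ih =>
    calc (f ^ (n + 1)) ((g ^ (n + 1)) x) = f ((f ^ n) (g ((g ^ n) x))) := by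
          rw [pow_succ', pow_succ']; rfl
      _ ≤ f (g ((f ^ n) ((g ^ n) x))) :=
          f.monotone (pow_map_map_le hf hle n (mapsTo_pow hg n hx))
      _ ≤ f (g (((f * g) ^ n) x)) := f.monotone (g.monotone ih)
      _ = ((f * g) ^ (n + 1)) x := by rw [pow_succ']; rfl

theorem mul_pow_le_pow_map_pow (n : ℕ) {x : ℝ} (hx : x ∈ K) :
    ((f * g) ^ n) x ≤ (g ^ n) ((f ^ n) x) := by
  induction n with
  | zero => exact le_rfl
  | succ n ih =>
    calc ((f * g) ^ (n + 1)) x = f (g (((f * g) ^ n) x)) := by rw [pow_succ']; rfl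
      _ ≤ f (g ((g ^ n) ((f ^ n) x))) := f.monotone (g.monotone ih)
      _ = f ((g ^ (n + 1)) ((f ^ n) x)) := by rw [pow_succ']; rfl
      _ ≤ (g ^ (n + 1)) (f ((f ^ n) x)) :=
          map_pow_map_le hg hle (n + 1) (mapsTo_pow hf n hx)
      _ = (g ^ (n + 1)) ((f ^ (n + 1)) x) := by rw [pow_succ' f]; rfl

/-- Hölder's argument: `(f * g) ^ n` stays between `f ^ n * g ^ n` and `g ^ n * f ^ n`. -/
theorem translationNumber_mul_of_map_map_le {x : ℝ} (hx : x ∈ K) :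
    translationNumber (f * g) = translationNumber f + translationNumber g := by
  have hbound (n : ℕ) :
      n * |translationNumber (f * g) - (translationNumber f + translationNumber g)| ≤ 3 := by
    have hf₁ := abs_le.1 (abs_pow_map_sub_self_sub_translationNumber_le f n x)
    have hg₁ := abs_le.1 (abs_pow_map_sub_self_sub_translationNumber_le g n x)
    have hf₂ := abs_le.1 (abs_pow_map_sub_self_sub_translationNumber_le f n ((g ^ n) x))
    have hg₂ := abs_le.1 (abs_pow_map_sub_self_sub_translationNumber_le g n ((f ^ n) x))
    have hfg := abs_le.1 (abs_pow_map_sub_self_sub_translationNumber_le (f * g) n x)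
    have hlower := pow_map_pow_le_mul_pow hf hg hle n hx
    have hupper := mul_pow_le_pow_map_pow hf hg hle n hx
    rw [← abs_of_nonneg (Nat.cast_nonneg (α := ℝ) n), ← abs_mul, abs_le]
    constructor <;> linarith
  by_contra hne
  obtain ⟨n, hn⟩ := Archimedean.arch 4 (abs_pos.2 (sub_ne_zero.2 hne))
  rw [nsmul_eq_mul] at hn
  linarith [hbound n]

end

/-- The stabilizer of `x` for the action of `CircleDeg1Liftˣ` on the line. -/
def lineStabilizer (x : ℝ) : Subgroup CircleDeg1Liftˣ :=
  (MulAction.stabilizer (ℝ ≃o ℝ) x).comap toOrderIso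

theorem mem_lineStabilizer {x : ℝ} {u : CircleDeg1Liftˣ} : u ∈ lineStabilizer x ↔ u x = x :=
  Iff.rfl

theorem continuous_units (u : CircleDeg1Liftˣ) : Continuous u :=
  (toOrderIso u).continuous

theorem strictMono_units (u : CircleDeg1Liftˣ) : StrictMono u :=
  (toOrderIso u).strictMono

/-- The set `A` is invariant under every element of `G`. -/
def IsInvariantUnder (G : Subgroup CircleDeg1Liftˣ) (A : Set ℝ) : Prop :=
  ∀ g ∈ G, MapsTo g A A

section

variable {H : Subgroup CircleDeg1Liftˣ} {K : Set ℝ} (hK : IsInvariantUnder H K)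
  (htri : ∀ h ∈ H, EqOn h id K ∨ (∀ x, x < h x) ∨ ∀ x, h x < x)

include hK htri

theorem translationNumber_mul_of_trichotomy (hne : K.Nonempty) {a b : CircleDeg1Liftˣ}
    (ha : a ∈ H) (hb : b ∈ H) :
    translationNumber (a * b : CircleDeg1Liftˣ) = translationNumber a + translationNumber b := by
  obtain ⟨x, hx⟩ := hne
  let c := (b * a)⁻¹ * (a * b)
  have hc (y : ℝ) : b (a (c y)) = a (b y) := units_apply_inv_apply (b * a) ((a * b) y)
  have hle : (∀ y ∈ K, a (b y) ≤ b (a y)) ∨ ∀ y ∈ K, b (a y) ≤ a (b y) := by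
    rcases htri c (mul_mem (inv_mem (mul_mem hb ha)) (mul_mem ha hb)) with h | h | h
    · exact .inl fun y hy => (by rw [← hc, h hy, id] : a (b y) = b (a y)).le
    · exact .inr fun y _ => hc y ▸ (strictMono_units b (strictMono_units a (h y))).le
    · exact .inl fun y _ => hc y ▸ (strictMono_units b (strictMono_units a (h y))).le
  rcases hle with h | h
  · exact translationNumber_mul_of_map_map_le (hK a ha) (hK b hb) h hx
  · have hconj : (a : CircleDeg1Lift) * (b * a) * ↑a⁻¹ = ↑(a * b) := by simp [mul_assoc]
    rw [← hconj, translationNumber_conj_eq,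
      translationNumber_mul_of_map_map_le (hK b hb) (hK a ha) h hx, add_comm]

theorem commutator_le_lineStabilizer_of_trichotomy {x : ℝ} (hx : x ∈ K) :
    ⁅H, H⁆ ≤ lineStabilizer x := by
  refine Subgroup.commutator_le.2 fun a ha b hb => mem_lineStabilizer.2 ?_
  have hadd {u v : CircleDeg1Liftˣ} (hu : u ∈ H) (hv : v ∈ H) :=
    translationNumber_mul_of_trichotomy hK htri ⟨x, hx⟩ hu hv
  have hcH : ⁅a, b⁆ ∈ H := Subgroup.commutator_le_self H (Subgroup.commutator_mem_commutator ha hb)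
  have hzero : translationNumber (⁅a, b⁆ : CircleDeg1Liftˣ) = (0 : ℤ) := by
    have hmul : ⁅a, b⁆ * (b * a) = a * b := by group
    have := hadd hcH (mul_mem hb ha)
    rw [hmul, hadd ha hb, hadd hb ha] at this
    rw [Int.cast_zero]
    linarith
  obtain ⟨y, hy⟩ := (translationNumber_eq_int_iff _ (continuous_units _)).1 hzero
  rw [Int.cast_zero, add_zero] at hy
  rcases htri _ hcH with h | h | h
  · exact h hx
  · exact absurd hy (h y).ne'
  · exact absurd hy (h y).ne

end

theorem orderIso_int_apply (f : ℤ ≃o ℤ) (n : ℤ) : f n = n + f 0 := by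
  have hsucc (m : ℤ) : f (m + 1) = f m + 1 := f.map_succ m
  induction n using Int.induction_on with
  | zero => rw [zero_add]
  | succ n ih => rw [hsucc, ih]; ring
  | pred n ih =>
    have h := hsucc (-n - 1)
    rw [sub_add_cancel, ih] at h
    linarith

theorem orderIso_int_commute (f g : ℤ ≃o ℤ) (n : ℤ) : f (g n) = g (f n) := by
  linarith [orderIso_int_apply f (g n), orderIso_int_apply g n, orderIso_int_apply g (f n),
    orderIso_int_apply f n]

theorem nonempty_orderIso_int {A : Set ℝ} [Nonempty A] [NoMaxOrder A] [NoMinOrder A] {ε : ℝ}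
    (hε : 0 < ε) (hA : A.Pairwise fun x y => ε ≤ dist x y) : Nonempty (A ≃o ℤ) := by
  have hdiscrete : DiscreteTopology A :=
    .of_forall_le_dist hε fun x y hxy => hA x.2 y.2 (Subtype.coe_injective.ne hxy)
  have hfin (a b : A) : (Icc a b).Finite := by
    have := Metric.finite_isBounded_inter_isClosed hdiscrete.isDiscrete
      (Metric.isBounded_Icc a.1 b.1) (Metric.isClosed_of_pairwise_le_dist hε hA)
    exact (this.preimage Subtype.val_injective.injOn).subset fun x hx => ⟨hx, x.2⟩
  let _ : LocallyFiniteOrder A := .ofFiniteIcc hfin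
  let _ : SuccOrder A := LinearLocallyFiniteOrder.succOrder A
  let _ : PredOrder A := LinearLocallyFiniteOrder.predOrder A
  exact ⟨orderIsoIntOfLinearSuccPredArch⟩

section

variable {G : Subgroup CircleDeg1Liftˣ} {A C K : Set ℝ}

/-- The order automorphism of a `G`-invariant set induced by an element of `G`. -/
def restrictInvariant (hA : IsInvariantUnder G A) (g : G) : A ≃o A where
  toFun x := ⟨(g : CircleDeg1Liftˣ) x, hA g g.2 x.2⟩
  invFun x := ⟨(g⁻¹ : CircleDeg1Liftˣ) x, hA _ (inv_mem g.2) x.2⟩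
  left_inv _ := Subtype.ext (units_inv_apply_apply _ _)
  right_inv _ := Subtype.ext (units_apply_inv_apply _ _)
  map_rel_iff' := (strictMono_units g).le_iff_le

theorem commutator_le_lineStabilizer_of_orderIso_int (hA : IsInvariantUnder G A) (e : A ≃o ℤ)
    {x : ℝ} (hx : x ∈ A) : ⁅G, G⁆ ≤ lineStabilizer x := by
  have hcomm (a b : G) (y : A) : (a * b : CircleDeg1Liftˣ) y = (b * a : CircleDeg1Liftˣ) y := by
    let conj (g : G) : ℤ ≃o ℤ := (e.symm.trans (restrictInvariant hA g)).trans e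
    have h := orderIso_int_commute (conj a) (conj b) (e y)
    simp only [conj, OrderIso.trans_apply, OrderIso.symm_apply_apply] at h
    exact congrArg Subtype.val (e.injective h)
  refine Subgroup.commutator_le.2 fun a ha b hb => mem_lineStabilizer.2 ?_
  have h := hcomm ⟨a, ha⟩ ⟨b, hb⟩ ⟨_, hA _ (inv_mem (mul_mem hb ha)) hx⟩
  rw [units_apply_inv_apply, ← mul_apply, ← Units.val_mul] at h
  rwa [show ⁅a, b⁆ = a * b * (b * a)⁻¹ by group]

theorem IsInvariantUnder.add_int_mem (hA : IsInvariantUnder G A)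
    (hG : translate (Multiplicative.ofAdd 1) ∈ G) {x : ℝ} (hx : x ∈ A) (n : ℤ) : x + n ∈ A := by
  have h := hA _ (zpow_mem hG n) hx
  rwa [translate_zpow, mul_one, translate_apply, add_comm] at h

theorem commutator_le_lineStabilizer_of_pairwise_le_dist (hA : IsInvariantUnder G A)
    (hG : translate (Multiplicative.ofAdd 1) ∈ G) {ε : ℝ} (hε : 0 < ε)
    (hsep : A.Pairwise fun x y => ε ≤ dist x y) {x : ℝ} (hx : x ∈ A) :
    ⁅G, G⁆ ≤ lineStabilizer x := by
  have hshift (y : A) (n : ℤ) := hA.add_int_mem hG y.2 n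
  have : Nonempty A := ⟨⟨x, hx⟩⟩
  have : NoMaxOrder A := ⟨fun y => ⟨⟨_, hshift y 1⟩, show y.1 < y.1 + (1 : ℤ) by simp⟩⟩
  have : NoMinOrder A := ⟨fun y => ⟨⟨_, hshift y (-1)⟩, show y.1 + (-1 : ℤ) < y.1 by simp⟩⟩
  obtain ⟨e⟩ := nonempty_orderIso_int hε hsep
  exact commutator_le_lineStabilizer_of_orderIso_int hA e hx

theorem add_neg_floor_mem_Icc (x : ℝ) : x + (-⌊x⌋ : ℤ) ∈ Icc (0 : ℝ) 1 := by
  rw [Int.cast_neg, ← sub_eq_add_neg]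
  exact ⟨Int.fract_nonneg x, (Int.fract_lt_one x).le⟩

theorem exists_pos_le_dist_of_disjoint (hC : IsInvariantUnder G C) (hK : IsInvariantUnder G K)
    (hG : translate (Multiplicative.ofAdd 1) ∈ G) (hCclosed : IsClosed C) (hKclosed : IsClosed K)
    (hdisj : Disjoint C K) : ∃ ε > 0, ∀ c ∈ C, ∀ x ∈ K, ε ≤ dist c x := by
  obtain ⟨ε, hε, h⟩ := Metric.exists_pos_forall_lt_edist
    (isCompact_Icc (a := (0 : ℝ)) (b := 1) |>.inter_left hCclosed) hKclosed
    (hdisj.mono_left inter_subset_left)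
  refine ⟨ε, hε, fun c hc x hx => ?_⟩
  have hshift := h (c + (-⌊c⌋ : ℤ)) ⟨hC.add_int_mem hG hc _, add_neg_floor_mem_Icc c⟩ _
    (hK.add_int_mem hG hx (-⌊c⌋))
  rw [edist_add_right, edist_nndist, ENNReal.coe_lt_coe] at hshift
  exact hshift.le

theorem exists_isGreatest_inter_Iic (hK : IsInvariantUnder G K)
    (hG : translate (Multiplicative.ofAdd 1) ∈ G) (hKclosed : IsClosed K) (hne : K.Nonempty)
    (c : ℝ) : ∃ a, IsGreatest (K ∩ Iic c) a := by
  obtain ⟨x, hx⟩ := hne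
  have hmem : x + (-⌈x - c⌉ : ℤ) ∈ Iic c := by
    have := Int.le_ceil (x - c)
    rw [mem_Iic]
    push_cast
    linarith
  exact ⟨_, (hKclosed.inter isClosed_Iic).isGreatest_csSup
    ⟨_, hK.add_int_mem hG hx _, hmem⟩ (bddAbove_Iic.mono inter_subset_right)⟩

theorem IsInvariantUnder.setOf_isGreatest (hC : IsInvariantUnder G C) (hK : IsInvariantUnder G K) :
    IsInvariantUnder G {a | ∃ c ∈ C, IsGreatest (K ∩ Iic c) a} := by
  rintro g hg a ⟨c, hc, ⟨haK, hac⟩, hmax⟩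
  refine ⟨g c, hC g hg hc, ⟨hK g hg haK, (strictMono_units g).monotone hac⟩, fun y ⟨hyK, hy⟩ => ?_⟩
  have hinv := hmax ⟨hK _ (inv_mem hg) hyK, (by
    simpa only [units_inv_apply_apply] using (strictMono_units g⁻¹).monotone hy :
      (g⁻¹ : CircleDeg1Liftˣ) y ≤ c)⟩
  simpa only [units_apply_inv_apply] using (strictMono_units g).monotone hinv

theorem exists_commutator_le_lineStabilizer_of_disjoint (hC : IsInvariantUnder G C)
    (hK : IsInvariantUnder G K) (hG : translate (Multiplicative.ofAdd 1) ∈ G)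
    (hCclosed : IsClosed C) (hKclosed : IsClosed K) (hCne : C.Nonempty) (hKne : K.Nonempty)
    (hdisj : Disjoint C K) : ∃ x, ⁅G, G⁆ ≤ lineStabilizer x := by
  obtain ⟨ε, hε, hdist⟩ := exists_pos_le_dist_of_disjoint hC hK hG hCclosed hKclosed hdisj
  have hlt {a b : ℝ} (ha : ∃ c ∈ C, IsGreatest (K ∩ Iic c) a)
      (hb : ∃ c ∈ C, IsGreatest (K ∩ Iic c) b) (hab : a < b) : ε ≤ dist a b := by
    obtain ⟨c, hc, ⟨-, hac⟩, hmax⟩ := ha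
    obtain ⟨-, -, ⟨hbK, -⟩, -⟩ := hb
    have hcb : c < b := lt_of_not_ge fun h => (hmax ⟨hbK, h⟩).not_gt hab
    calc ε ≤ dist c b := hdist c hc b hbK
      _ ≤ dist a b := by
        rw [dist_comm c, dist_comm a, Real.dist_eq, Real.dist_eq, abs_of_pos (sub_pos.2 hcb),
          abs_of_pos (sub_pos.2 hab)]
        exact sub_le_sub_left hac b
  obtain ⟨c, hc⟩ := hCne
  obtain ⟨a, ha⟩ := exists_isGreatest_inter_Iic hK hG hKclosed hKne c
  exact ⟨a, commutator_le_lineStabilizer_of_pairwise_le_dist (hC.setOf_isGreatest hK) hG hε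
    (fun x hx y hy hxy => hxy.lt_or_gt.elim (hlt hx hy) fun h =>
      (hlt hy hx h).trans_eq (dist_comm y x))
    ⟨c, hc, ha⟩⟩

/-- The intersection of all nonempty closed `G`-invariant sets: it is the unique minimal one as
soon as no two of them are disjoint. -/
def invariantCore (G : Subgroup CircleDeg1Liftˣ) : Set ℝ :=
  ⋂₀ {A | IsInvariantUnder G A ∧ IsClosed A ∧ A.Nonempty}

theorem invariantCore_nonempty (hG : translate (Multiplicative.ofAdd 1) ∈ G)
    (hmeet : ∀ C K, IsInvariantUnder G C → IsInvariantUnder G K → IsClosed C → IsClosed K →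
      C.Nonempty → K.Nonempty → ¬ Disjoint C K) :
    (invariantCore G).Nonempty := by
  let I := {A : Set ℝ // IsInvariantUnder G A ∧ IsClosed A ∧ A.Nonempty}
  have : Nonempty I := ⟨⟨univ, fun _ _ => mapsTo_univ _ _, isClosed_univ, univ_nonempty⟩⟩
  have hdir : Directed (· ⊇ ·) fun A : I => A.1 ∩ Icc 0 1 := by
    rintro ⟨A, hA, hAc, hAne⟩ ⟨B, hB, hBc, hBne⟩
    refine ⟨⟨A ∩ B, fun g hg => (hA g hg).inter_inter (hB g hg), hAc.inter hBc,
      not_disjoint_iff_nonempty_inter.1 (hmeet A B hA hB hAc hBc hAne hBne)⟩, ?_, ?_⟩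
    · exact inter_subset_inter_left _ inter_subset_left
    · exact inter_subset_inter_left _ inter_subset_right
  have hunit (A : I) : (A.1 ∩ Icc 0 1).Nonempty := by
    obtain ⟨A, hA, -, x, hx⟩ := A
    exact ⟨x + (-⌊x⌋ : ℤ), hA.add_int_mem hG hx _, add_neg_floor_mem_Icc x⟩
  obtain ⟨x, hx⟩ := IsCompact.nonempty_iInter_of_directed_nonempty_isCompact_isClosed _ hdir hunit
    (fun A => isCompact_Icc.inter_left A.2.2.1) fun A => A.2.2.1.inter isClosed_Icc
  exact ⟨x, fun A hA => (mem_iInter.1 hx ⟨A, hA⟩).1⟩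

theorem forall_lt_or_forall_gt_of_ne (u : CircleDeg1Liftˣ) (h : ∀ x, u x ≠ x) :
    (∀ x, x < u x) ∨ ∀ x, u x < x := by
  by_contra! hcon
  obtain ⟨x, hx⟩ := mem_range_of_exists_le_of_exists_ge ((continuous_units u).sub continuous_id)
    (hcon.1.imp fun _ => sub_nonpos.2) (hcon.2.imp fun _ => sub_nonneg.2)
  exact h x (sub_eq_zero.1 hx)

variable {H : Subgroup CircleDeg1Liftˣ}

theorem map_map_comm_of_commute (hcomm : ∀ g ∈ G, ∀ h ∈ H, Commute g h) {g h : CircleDeg1Liftˣ}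
    (hg : g ∈ G) (hh : h ∈ H) (x : ℝ) : h (g x) = g (h x) :=
  DFunLike.congr_fun (congrArg Units.val (hcomm g hg h hh).eq.symm) x

theorem isInvariantUnder_invariantCore (hcomm : ∀ g ∈ G, ∀ h ∈ H, Commute g h) :
    IsInvariantUnder H (invariantCore G) := by
  intro h hh x hx A ⟨hA, hAc, hAne⟩
  refine hx (h ⁻¹' A) ⟨fun g hg y hy => ?_, hAc.preimage (continuous_units h),
    hAne.preimage (toOrderIso h).surjective⟩
  rw [mem_preimage, map_map_comm_of_commute hcomm hg hh]
  exact hA g hg hy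

theorem trichotomy_invariantCore (hcomm : ∀ g ∈ G, ∀ h ∈ H, Commute g h) (h : CircleDeg1Liftˣ)
    (hh : h ∈ H) : EqOn h id (invariantCore G) ∨ (∀ x, x < h x) ∨ ∀ x, h x < x := by
  by_cases hfix : ∃ y, h y = y
  · refine .inl fun y hy => hy {z | h z = z} ⟨fun g hg z hz => ?_,
      isClosed_eq (continuous_units h) continuous_id, hfix⟩
    exact (map_map_comm_of_commute hcomm hg hh z).trans (congrArg g hz)
  · exact .inr (forall_lt_or_forall_gt_of_ne h (not_exists.1 hfix))

theorem exists_commutator_le_lineStabilizer_of_commute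
    (hcomm : ∀ g ∈ G, ∀ h ∈ H, Commute g h) (hG : translate (Multiplicative.ofAdd 1) ∈ G) :
    (∃ x, ⁅G, G⁆ ≤ lineStabilizer x) ∨ ∃ x, ⁅H, H⁆ ≤ lineStabilizer x := by
  by_cases hmeet : ∀ C K, IsInvariantUnder G C → IsInvariantUnder G K → IsClosed C → IsClosed K →
      C.Nonempty → K.Nonempty → ¬ Disjoint C K
  · obtain ⟨x, hx⟩ := invariantCore_nonempty hG hmeet
    exact .inr ⟨x, commutator_le_lineStabilizer_of_trichotomy
      (isInvariantUnder_invariantCore hcomm) (trichotomy_invariantCore hcomm) hx⟩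
  · push Not at hmeet
    obtain ⟨C, K, hC, hK, hCclosed, hKclosed, hCne, hKne, hdisj⟩ := hmeet
    exact .inl (exists_commutator_le_lineStabilizer_of_disjoint hC hK hG hCclosed hKclosed hCne
      hKne hdisj)

end

end CommutingCircleActions

section CircleDiffeomorphisms

open CircleDeg1Lift
open scoped commutatorElement

/-- The monoid homomorphism sending a degree one lift to the self-map of the circle it induces. -/
def circleEnd : CircleDeg1Lift →* Function.End 𝕊 where
  toFun F := Function.Periodic.lift (f := fun x => ((F x : ℝ) : 𝕊)) (c := 1) fun x => by
    simp only [map_add_one, AddCircle.coe_add, AddCircle.coe_period, add_zero]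
  map_one' := by
    funext z
    induction z using QuotientAddGroup.induction_on
    rfl
  map_mul' F G := by
    funext z
    induction z using QuotientAddGroup.induction_on
    rfl

/-- The homomorphism sending an invertible degree one lift to the permutation of the circle of
which it is a lift. The lifts of the elements of a group `K` of permutations of the circle form
the group `K.comap circlePerm`. -/
def circlePerm : CircleDeg1Liftˣ →* Equiv.Perm 𝕊 :=
  Equiv.Perm.equivUnitsEnd.symm.toMonoidHom.comp (Units.map circleEnd)

theorem circlePerm_coe (u : CircleDeg1Liftˣ) (x : ℝ) : circlePerm u (x : 𝕊) = (u x : 𝕊) :=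
  rfl

theorem exists_circlePerm_eq {f : Equiv.Perm 𝕊} {F : ℝ → ℝ} (hF : IsOPLift f F) :
    ∃ u : CircleDeg1Liftˣ, ⇑u = F ∧ circlePerm u = f := by
  obtain ⟨hcont, hmono, hone, hproj⟩ := hF
  let G : CircleDeg1Lift := ⟨⟨F, hmono.monotone⟩, hone⟩
  have hbij : Function.Bijective G :=
    ⟨hmono.injective, hcont.surjective G.tendsto_atTop G.tendsto_atBot⟩
  obtain ⟨u, hu⟩ := isUnit_iff_bijective.2 hbij
  have huF : ⇑u = F := congrArg DFunLike.coe hu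
  refine ⟨u, huF, Equiv.ext fun z => ?_⟩
  induction z using QuotientAddGroup.induction_on with
  | H x => exact (circlePerm_coe u x).trans ((congrFun huF x).symm ▸ (hproj x).symm)

theorem translate_int_of_circlePerm_eq_one {u : CircleDeg1Liftˣ} (hu : circlePerm u = 1) :
    ∃ k : ℤ, u = translate (Multiplicative.ofAdd (k : ℝ)) := by
  have hint (x : ℝ) : u x - x ∈ Set.range ((↑) : ℤ → ℝ) := by
    have h : ((u x - x : ℝ) : 𝕊) = 0 := by
      rw [AddCircle.coe_sub, ← circlePerm_coe, hu, Equiv.Perm.one_apply, sub_self]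
    obtain ⟨k, hk⟩ := (AddCircle.coe_eq_zero_iff (1 : ℝ)).1 h
    exact ⟨k, by rw [← hk, zsmul_one]⟩
  obtain ⟨k, hk⟩ := hint 0
  have hconst (x : ℝ) : u x - x = u 0 - 0 :=
    isPreconnected_univ.constant_of_mapsTo (T := Set.range ((↑) : ℤ → ℝ))
      ⟨Int.isClosedEmbedding_coe_real.isEmbedding.toHomeomorph.symm.isEmbedding.discreteTopology⟩
      ((continuous_units u).sub continuous_id).continuousOn (fun x _ => hint x) trivial trivial
  refine ⟨k, Units.ext (CircleDeg1Lift.ext fun x => ?_)⟩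
  rw [translate_apply, hk, ← hconst x, sub_add_cancel]

theorem commute_of_commute_circlePerm {u v : CircleDeg1Liftˣ}
    (h : Commute (circlePerm u) (circlePerm v)) : Commute u v := by
  obtain ⟨k, hk⟩ := translate_int_of_circlePerm_eq_one (u := ⁅u, v⁆)
    ((map_commutatorElement circlePerm u v).trans (commutatorElement_eq_one_iff_commute.2 h))
  have hconj : u * v * u⁻¹ = translate (Multiplicative.ofAdd (k : ℝ)) * v := by
    rw [← hk, commutatorElement_def, inv_mul_cancel_right]
  have hcomm : Commute (translate (Multiplicative.ofAdd (k : ℝ)) : CircleDeg1Lift) v :=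
    CircleDeg1Lift.ext fun x => by
      simp only [mul_apply, translate_apply, map_int_add]
  have hτ := translationNumber_conj_eq u v
  rw [← Units.val_mul, ← Units.val_mul, hconj, Units.val_mul,
    translationNumber_mul_of_commute hcomm, translationNumber_translate] at hτ
  have hk0 : (k : ℝ) = 0 := left_eq_add.1 (by linarith)
  rw [← commutatorElement_eq_one_iff_commute, hk, hk0]
  exact map_one translate

theorem contDiff_of_isC1Diffeo_circlePerm {u : CircleDeg1Liftˣ} (hu : IsC1Diffeo (circlePerm u)) :
    ContDiff ℝ 1 u := by
  obtain ⟨F, hF, hF1, -⟩ := hu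
  obtain ⟨v, rfl, hv⟩ := exists_circlePerm_eq hF
  obtain ⟨k, hk⟩ := translate_int_of_circlePerm_eq_one (u := u * v⁻¹)
    (by rw [map_mul, map_inv, hv, mul_inv_cancel])
  rw [mul_inv_eq_iff_eq_mul.1 hk]
  exact contDiff_const.add hF1

theorem injective_circlePerm_comp_subtype (x : ℝ) :
    Function.Injective (circlePerm.comp (lineStabilizer x).subtype) := by
  refine (injective_iff_map_eq_one _).2 fun ⟨u, hu⟩ h => ?_
  obtain ⟨k, rfl⟩ := translate_int_of_circlePerm_eq_one h
  rw [mem_lineStabilizer, translate_apply] at hu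
  have hk : (k : ℝ) = 0 := add_eq_right.1 hu
  have htranslate : translate (Multiplicative.ofAdd (k : ℝ)) = 1 := by rw [hk, ofAdd_zero, map_one]
  exact Subtype.ext htranslate

variable {K K' Q Q' : Subgroup (Equiv.Perm 𝕊)}

theorem commutator_le_map_circlePerm (hK : ∀ f ∈ K, IsC1Diffeo f) :
    ⁅K, K⁆ ≤ ⁅K.comap circlePerm, K.comap circlePerm⁆.map circlePerm := by
  have hrange : K ≤ circlePerm.range := fun f hf => by
    obtain ⟨F, hF, -⟩ := hK f hf
    obtain ⟨u, -, hu⟩ := exists_circlePerm_eq hF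
    exact ⟨u, hu⟩
  rw [Subgroup.map_commutator, Subgroup.map_comap_eq_self hrange]

theorem eq_bot_of_commutator_le_lineStabilizer (hK : ∀ f ∈ K, IsC1Diffeo f) (hQ : Q ≤ ⁅K, K⁆)
    [Group.FG Q] [Subsingleton (Q →* Multiplicative ℝ)] {x : ℝ}
    (hx : ⁅K.comap circlePerm, K.comap circlePerm⁆ ≤ lineStabilizer x) : Q = ⊥ := by
  let toPerm : lineStabilizer x →* Equiv.Perm 𝕊 := circlePerm.comp (lineStabilizer x).subtype
  have hrange : Q ≤ toPerm.range := fun f hf => by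
    obtain ⟨u, hu, huf⟩ := commutator_le_map_circlePerm hK (hQ hf)
    exact ⟨⟨u, hx hu⟩, huf⟩
  let lift : Q →* lineStabilizer x :=
    (MonoidHom.ofInjective (injective_circlePerm_comp_subtype x)).symm.toMonoidHom.comp
      (Subgroup.inclusion hrange)
  have hlift (q : Q) : circlePerm (lift q) = q :=
    MonoidHom.apply_ofInjective_symm (injective_circlePerm_comp_subtype x)
      (Subgroup.inclusion hrange q)
  have hC1 (q : Q) : ContDiff ℝ 1 (lift q : CircleDeg1Liftˣ) :=
    contDiff_of_isC1Diffeo_circlePerm (hlift q ▸ hK q (Subgroup.commutator_le_self K (hQ q.2)))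
  have htriv := thurston_stability ((toOrderIso.comp (lineStabilizer x).subtype).comp lift) hC1
    (x₀ := x) fun q => mem_lineStabilizer.1 (lift q).2
  refine (Subgroup.eq_bot_iff_forall Q).2 fun q hq => ?_
  have hone : (lift ⟨q, hq⟩ : CircleDeg1Liftˣ) = 1 :=
    Units.ext (CircleDeg1Lift.ext fun y => DFunLike.congr_fun (DFunLike.congr_fun htriv ⟨q, hq⟩) y)
  exact (hlift ⟨q, hq⟩).symm.trans (by rw [hone, map_one])

theorem eq_bot_or_eq_bot_of_commute (hK : ∀ f ∈ K, IsC1Diffeo f) (hK' : ∀ f ∈ K', IsC1Diffeo f)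
    (hcomm : ∀ f ∈ K, ∀ g ∈ K', Commute f g) (hQ : Q ≤ ⁅K, K⁆) (hQ' : Q' ≤ ⁅K', K'⁆)
    [Group.FG Q] [Group.FG Q'] [Subsingleton (Q →* Multiplicative ℝ)]
    [Subsingleton (Q' →* Multiplicative ℝ)] : Q = ⊥ ∨ Q' = ⊥ := by
  have htranslate : circlePerm (translate (Multiplicative.ofAdd 1)) = 1 := by
    ext z
    induction z using QuotientAddGroup.induction_on with
    | H x =>
      change circlePerm _ (x : 𝕊) = (x : 𝕊)
      rw [circlePerm_coe, translate_apply, AddCircle.coe_add, AddCircle.coe_period, zero_add]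
  have hfix := exists_commutator_le_lineStabilizer_of_commute
    (G := K.comap circlePerm) (H := K'.comap circlePerm)
    (fun u hu v hv => commute_of_commute_circlePerm (hcomm _ hu _ hv))
    (Subgroup.mem_comap.2 (htranslate ▸ K.one_mem))
  exact hfix.imp (fun ⟨_, hx⟩ => eq_bot_of_commutator_le_lineStabilizer hK hQ hx)
    fun ⟨_, hx⟩ => eq_bot_of_commutator_le_lineStabilizer hK' hQ' hx

end CircleDiffeomorphisms

section FiniteIndex

variable {F Q A : Type*} [Group F] [Group Q] [CommGroup A]

theorem finiteIndex_commutator [Group.FG Q] [Subsingleton (Q →* Multiplicative ℝ)] :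
    (commutator Q).FiniteIndex := by
  have : Group.FG (Abelianization Q) := QuotientGroup.fg _
  obtain ⟨r, ι, _, p, hp, e, ⟨f⟩⟩ :=
    AddCommGroup.equiv_free_prod_directSum_zmod (Additive (Abelianization Q))
  have : IsEmpty (Fin r) := ⟨fun i => by
    let coord : Additive (Abelianization Q) →+ ℝ :=
      (Int.castAddHom ℝ).comp
        ((Finsupp.applyAddHom i).comp ((AddMonoidHom.fst _ _).comp f.toAddMonoidHom))
    have htriv : (AddMonoidHom.toMultiplicative coord).comp Abelianization.of = 1 :=
      Subsingleton.elim _ _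
    obtain ⟨a, ha⟩ := f.surjective (Finsupp.single i 1, 0)
    obtain ⟨q, hq⟩ := QuotientGroup.mk_surjective (s := commutator Q) a.toMul
    have hcoord : coord a = 0 := (congrArg coord hq.symm).trans (DFunLike.congr_fun htriv q)
    simp [coord, ha] at hcoord⟩
  have (i : ι) : NeZero (p i ^ e i) := ⟨pow_ne_zero _ (hp i).ne_zero⟩
  have : Finite (DirectSum ι fun i => ZMod (p i ^ e i)) :=
    .of_equiv _ (DirectSum.addEquivProd fun i => ZMod (p i ^ e i)).symm.toEquiv
  have : Finite (Q ⧸ commutator Q) := .of_equiv _ f.symm.toEquiv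
  exact Subgroup.finiteIndex_of_finite_quotient

theorem finiteIndex_comap (f : F →* Q) (H : Subgroup Q) [H.FiniteIndex] :
    (H.comap f).FiniteIndex := by
  rw [Subgroup.finiteIndex_iff, Subgroup.index_comap]
  exact H.isFiniteRelIndex_of_finiteIndex.relIndex_ne_zero

theorem apply_one_eq_apply_zero_of_mul_eq_sq [IsMulTorsionFree A] {f : ℕ → A}
    (hf : ∀ r, f r * f (r + 2) = f (r + 1) ^ 2) {m : ℕ} (hm : m ≠ 0) (hfm : f m = f 0) :
    f 1 = f 0 := by
  have hgeom (r : ℕ) : f (r + 1) / f r = f 1 / f 0 := by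
    induction r with
    | zero => rfl
    | succ r ih => rw [← ih, div_eq_div_iff_mul_eq_mul, mul_comm, hf, sq]
  have hpow (r : ℕ) : f r = f 0 * (f 1 / f 0) ^ r := by
    induction r with
    | zero => rw [pow_zero, mul_one]
    | succ r ih => rw [pow_succ, ← mul_assoc, ← ih, ← hgeom r, mul_div_cancel]
  rw [hpow, mul_eq_left] at hfm
  exact div_eq_one.1 (IsMulTorsionFree.pow_left_injective hm (hfm.trans (one_pow m).symm))

theorem transfer_eq_map_pow_index [IsMulTorsionFree A] {W : Subgroup F} [W.Normal] [W.FiniteIndex]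
    (χ : W →* A) (hχ : ∀ g w, χ (MulAut.conjNormal g w) = χ w) (g : F) :
    χ.transfer g = χ ⟨g ^ W.index, W.pow_index_mem g⟩ := by
  classical
  have := W.fintypeQuotientOfFiniteIndex
  refine IsMulTorsionFree.pow_left_injective (Subgroup.FiniteIndex.index_ne_zero (H := W)) ?_
  change χ.transfer g ^ W.index = _ ^ W.index
  rw [MonoidHom.transfer_eq_prod_quotient_orbitRel_zpowers_quot, ← Finset.prod_pow]
  rw [(congrArg (_ ^ ·) (W.index_eq_sum_minimalPeriod g) : _ = _), ← Finset.prod_pow_eq_pow_sum]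
  refine Finset.prod_congr rfl fun q _ => ?_
  rw [← hχ q.out.out, ← map_pow χ, ← map_pow χ]
  refine congrArg χ (Subtype.ext ?_)
  simp only [Subgroup.coe_pow, MulAut.conjNormal_apply]
  rw [pow_right_comm]
  congr 1
  group

theorem transfer_pow_eq_map_pow_index [IsMulTorsionFree A] {W : Subgroup F} [W.Normal]
    [W.FiniteIndex] {χ : W →* A} (hχ : ∀ g w, χ (MulAut.conjNormal g w) = χ w) {g : F} {m : ℕ}
    (hg : g ^ m ∈ W) : χ.transfer g ^ m = χ ⟨g ^ m, hg⟩ ^ W.index := by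
  rw [transfer_eq_map_pow_index χ hχ, ← map_pow, ← map_pow]
  exact congrArg χ (Subtype.ext (pow_right_comm g W.index m))

theorem eq_one_of_transfer_eq_one [IsMulTorsionFree A] {W : Subgroup F} [W.Normal]
    [W.FiniteIndex] {χ : W →* A} (hχ : ∀ g w, χ (MulAut.conjNormal g w) = χ w)
    (htransfer : χ.transfer = 1) : χ = 1 := by
  ext w
  refine IsMulTorsionFree.pow_left_injective (Subgroup.FiniteIndex.index_ne_zero (H := W)) ?_
  have hw := transfer_pow_eq_map_pow_index hχ (g := w.1) (m := 1) ((pow_one w.1).symm ▸ w.2)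
  simp only [pow_one, htransfer, MonoidHom.one_apply] at hw ⊢
  rw [one_pow, hw]

theorem map_conjNormal_eq_of_generators {W : Subgroup F} [W.Normal] {χ : W →* A} {S : Set F}
    (hS : Subgroup.closure S = ⊤) (hχ : ∀ g ∈ S, ∀ w, χ (MulAut.conjNormal g w) = χ w) (g : F)
    (w : W) : χ (MulAut.conjNormal g w) = χ w := by
  have hg : g ∈ Subgroup.closure S := hS ▸ Subgroup.mem_top g
  induction hg using Subgroup.closure_induction generalizing w with
  | mem g hg => exact hχ g hg w
  | one => rw [map_one, MulAut.one_apply]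
  | mul a b _ _ ha hb => rw [map_mul, MulAut.mul_apply, ha, hb]
  | inv a _ ha =>
    rw [← ha, ← MulAut.mul_apply, ← map_mul, mul_inv_cancel, map_one, MulAut.one_apply]

end FiniteIndex

section Transvections

open scoped commutatorElement
open FreeGroup (of)

variable {α β : Type*}

theorem mulAut_freeGroup_ext {a b : MulAut (FreeGroup α)} (h : ∀ m, a (of m) = b (of m)) : a = b :=
  MulEquiv.toMonoidHom_injective (FreeGroup.ext_hom _ _ h)

theorem map_freeGroupMap_eq_self {f : FreeGroup α →* FreeGroup α} {c : β → α}
    (hf : ∀ b, f (of (c b)) = of (c b)) (w : FreeGroup β) :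
    f (FreeGroup.map c w) = FreeGroup.map c w :=
  DFunLike.congr_fun (FreeGroup.ext_hom (f.comp (FreeGroup.map c)) _ fun b => by
    simpa only [MonoidHom.comp_apply, FreeGroup.map.of] using hf b) w

/-- The embedding of a two-letter alphabet with values `j` and `l`. -/
def letterPair {j l : α} (h : j ≠ l) : Fin 2 ↪ α :=
  ⟨![j, l], by rw [← List.nodup_ofFn]; simpa using h⟩

theorem letterPair_ne {i j l : α} (h : j ≠ l) (hj : j ≠ i) (hl : l ≠ i) (b : Fin 2) :
    letterPair h b ≠ i := by
  fin_cases b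
  · exact hj
  · exact hl

/-- The word `[y⁻¹, x]` in two letters `x` and `y`. -/
def commWord : FreeGroup (Fin 2) := ⁅(of 1 : FreeGroup (Fin 2))⁻¹, (of 0 : FreeGroup (Fin 2))⁆

/-- The word `[[y⁻¹, x], x]` in two letters `x` and `y`. -/
def commCommWord : FreeGroup (Fin 2) := ⁅commWord, (of 0 : FreeGroup (Fin 2))⁆

theorem map_letterPair_commWord {j l : α} (h : j ≠ l) :
    FreeGroup.map (letterPair h) commWord = ⁅(of l)⁻¹, of j⁆ := by
  rw [commWord, map_commutatorElement, map_inv, FreeGroup.map.of, FreeGroup.map.of]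
  rfl

theorem map_letterPair_commCommWord {j l : α} (h : j ≠ l) :
    FreeGroup.map (letterPair h) commCommWord = ⁅⁅(of l)⁻¹, of j⁆, of j⁆ := by
  rw [commCommWord, map_commutatorElement, map_letterPair_commWord, FreeGroup.map.of]
  rfl

variable [DecidableEq α] {i l : α} {c : β → α}

/-- The endomorphism of a free group that deletes the letter `i` from every word. -/
def eraseLetter (i : α) : FreeGroup α →* FreeGroup α :=
  FreeGroup.lift (Function.update of i 1)

theorem eraseLetter_of_self (i : α) : eraseLetter i (of i) = 1 := by
  rw [eraseLetter, FreeGroup.lift_apply_of, Function.update_self]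

theorem eraseLetter_of_ne {m : α} (h : m ≠ i) : eraseLetter i (of m) = of m := by
  rw [eraseLetter, FreeGroup.lift_apply_of, Function.update_of_ne h]

theorem eraseLetter_map (hi : ∀ b, c b ≠ i) (w : FreeGroup β) :
    eraseLetter i (FreeGroup.map c w) = FreeGroup.map c w :=
  map_freeGroupMap_eq_self (fun b => eraseLetter_of_ne (hi b)) w

/-- The endomorphism `x_i ↦ u⁻¹ x_i v` underlying the two-sided transvection. -/
def transvectionHom (i : α) (p : FreeGroup α × FreeGroup α) : FreeGroup α →* FreeGroup α :=
  FreeGroup.lift (Function.update of i ((eraseLetter i p.1)⁻¹ * of i * eraseLetter i p.2))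

theorem transvectionHom_of_self (i : α) (p : FreeGroup α × FreeGroup α) :
    transvectionHom i p (of i) = (eraseLetter i p.1)⁻¹ * of i * eraseLetter i p.2 := by
  rw [transvectionHom, FreeGroup.lift_apply_of, Function.update_self]

theorem transvectionHom_of_ne {m : α} (h : m ≠ i) (p : FreeGroup α × FreeGroup α) :
    transvectionHom i p (of m) = of m := by
  rw [transvectionHom, FreeGroup.lift_apply_of, Function.update_of_ne h]

theorem transvectionHom_eraseLetter (i : α) (p : FreeGroup α × FreeGroup α) (y : FreeGroup α) :
    transvectionHom i p (eraseLetter i y) = eraseLetter i y :=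
  DFunLike.congr_fun (FreeGroup.ext_hom ((transvectionHom i p).comp (eraseLetter i)) _ fun m => by
    rw [MonoidHom.comp_apply]
    obtain rfl | h := eq_or_ne m i
    · rw [eraseLetter_of_self, map_one]
    · rw [eraseLetter_of_ne h, transvectionHom_of_ne h]) y

theorem transvectionHom_mul (i : α) (p q : FreeGroup α × FreeGroup α) :
    transvectionHom i (p * q) = (transvectionHom i p).comp (transvectionHom i q) :=
  FreeGroup.ext_hom _ _ fun m => by
    rw [MonoidHom.comp_apply]
    obtain rfl | h := eq_or_ne m i
    · simp only [transvectionHom_of_self, map_mul, map_inv, transvectionHom_eraseLetter,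
        Prod.fst_mul, Prod.snd_mul, mul_inv_rev, mul_assoc]
    · simp only [transvectionHom_of_ne h]

theorem transvectionHom_one (i : α) : transvectionHom i 1 = MonoidHom.id (FreeGroup α) :=
  FreeGroup.ext_hom _ _ fun m => by
    obtain rfl | h := eq_or_ne m i
    · simp only [transvectionHom_of_self, Prod.fst_one, Prod.snd_one, map_one, inv_one, one_mul,
        mul_one, MonoidHom.id_apply]
    · rw [transvectionHom_of_ne h, MonoidHom.id_apply]

/-- The two-sided transvection `x_i ↦ u⁻¹ x_i v` of a free group, fixing the other generators, as
a homomorphism in `(u, v)`. The letter `i` is first deleted from `u` and `v`, so that all pairs of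
words are allowed. -/
def transvection (i : α) : FreeGroup α × FreeGroup α →* MulAut (FreeGroup α) :=
  MonoidHom.mk'
    (fun p => (transvectionHom i p).toMulEquiv (transvectionHom i p⁻¹)
      (by rw [← transvectionHom_mul, inv_mul_cancel, transvectionHom_one])
      (by rw [← transvectionHom_mul, mul_inv_cancel, transvectionHom_one]))
    fun p q => mulAut_freeGroup_ext fun m => DFunLike.congr_fun (transvectionHom_mul i p q) (of m)

theorem transvection_of_self (i : α) (p : FreeGroup α × FreeGroup α) :
    transvection i p (of i) = (eraseLetter i p.1)⁻¹ * of i * eraseLetter i p.2 :=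
  transvectionHom_of_self i p

theorem transvection_of_ne {m : α} (h : m ≠ i) (p : FreeGroup α × FreeGroup α) :
    transvection i p (of m) = of m :=
  transvectionHom_of_ne h p

theorem transvection_eraseLetter_comm (hil : i ≠ l) {p : FreeGroup α × FreeGroup α}
    (hi : eraseLetter i p.1 = p.1 ∧ eraseLetter i p.2 = p.2)
    (hl : eraseLetter l p.1 = p.1 ∧ eraseLetter l p.2 = p.2) (y : FreeGroup α) :
    transvection l p (eraseLetter i y) = eraseLetter i (transvection l p y) :=
  DFunLike.congr_fun (FreeGroup.ext_hom ((transvection l p).toMonoidHom.comp (eraseLetter i))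
    ((eraseLetter i).comp (transvection l p).toMonoidHom) fun m => by
      simp only [MonoidHom.comp_apply, MulEquiv.coe_toMonoidHom]
      obtain rfl | hm := eq_or_ne m l
      · simp only [eraseLetter_of_ne hil.symm, transvection_of_self, hl, map_mul, map_inv, hi]
      obtain rfl | hm' := eq_or_ne m i
      · rw [transvection_of_ne hm, eraseLetter_of_self, map_one]
      · rw [transvection_of_ne hm, eraseLetter_of_ne hm', transvection_of_ne hm]) y

theorem conj_transvection {a : MulAut (FreeGroup α)} (hai : a (of i) = of i)
    (ha : ∀ y, a (eraseLetter i y) = eraseLetter i (a y)) (p : FreeGroup α × FreeGroup α) :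
    a * transvection i p * a⁻¹ = transvection i (a p.1, a p.2) := by
  rw [mul_inv_eq_iff_eq_mul]
  refine mulAut_freeGroup_ext fun m => ?_
  simp only [MulAut.mul_apply]
  obtain rfl | h := eq_or_ne m i
  · simp only [hai, transvection_of_self, map_mul, map_inv, ha]
  · rw [transvection_of_ne h, ← eraseLetter_of_ne h, ha]
    exact (transvectionHom_eraseLetter i _ _).symm

/-- The inclusion of a group in its square as the left (`true`) or right (`false`) factor. -/
def side {G : Type*} [Group G] (s : Bool) : G →* G × G :=
  bif s then MonoidHom.inl G G else MonoidHom.inr G G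

theorem map_side {G H : Type*} [Group G] [Group H] (f : G →* H) (s : Bool) (y : G) :
    (f (side s y).1, f (side s y).2) = side s (f y) := by
  cases s
  · exact Prod.ext (map_one f) rfl
  · exact Prod.ext rfl (map_one f)

/-- The one-sided transvection `x_i ↦ w⁻¹ x_i` (for `s = true`) or `x_i ↦ x_i w` (for
`s = false`). -/
def oneSided (i : α) (s : Bool) : FreeGroup α →* MulAut (FreeGroup α) :=
  (transvection i).comp (side s)

/-- The partial conjugation `x_i ↦ g⁻¹ x_i g`. -/
def partialConj (i : α) : FreeGroup α →* MulAut (FreeGroup α) :=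
  (transvection i).comp ((MonoidHom.id _).prod (MonoidHom.id _))

theorem partialConj_conj_oneSided (i : α) (s : Bool) (g w : FreeGroup α) :
    partialConj i g * oneSided i s w * (partialConj i g)⁻¹ = oneSided i s (g * w * g⁻¹) := by
  simp only [partialConj, oneSided, MonoidHom.comp_apply, ← map_inv, ← map_mul]
  congr 1
  cases s <;> simp [side]

theorem oneSided_false_of_self (hi : ∀ b, c b ≠ i) (w : FreeGroup β) :
    oneSided i false (FreeGroup.map c w) (of i) = of i * FreeGroup.map c w := by
  refine (transvection_of_self i _).trans ?_
  rw [show side false (FreeGroup.map c w) = (1, FreeGroup.map c w) from rfl, eraseLetter_map hi,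
    map_one, inv_one, one_mul]

theorem oneSided_of_ne {m : α} (h : m ≠ i) (s : Bool) (w : FreeGroup α) :
    oneSided i s w (of m) = of m :=
  transvection_of_ne h _

theorem oneSided_conj_oneSided (hil : i ≠ l) (hi : ∀ b, c b ≠ i) (hl : ∀ b, c b ≠ l) (s r : Bool)
    (w : FreeGroup β) (y : FreeGroup α) :
    oneSided l r (FreeGroup.map c w) * oneSided i s y * (oneSided l r (FreeGroup.map c w))⁻¹ =
      oneSided i s (oneSided l r (FreeGroup.map c w) y) := by
  have hfix {m : α} (hm : ∀ b, c b ≠ m) :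
      eraseLetter m (side r (FreeGroup.map c w)).1 = (side r (FreeGroup.map c w)).1 ∧
        eraseLetter m (side r (FreeGroup.map c w)).2 = (side r (FreeGroup.map c w)).2 := by
    cases r
    · exact ⟨map_one _, eraseLetter_map hm w⟩
    · exact ⟨eraseLetter_map hm w, map_one _⟩
  refine (conj_transvection (oneSided_of_ne hil r _)
    (transvection_eraseLetter_comm hil (hfix hi) (hfix hl)) _).trans ?_
  exact congrArg _ (map_side (oneSided l r (FreeGroup.map c w)).toMonoidHom s y)

/-- The two-sided transvections of `x_i` by pairs of words in the letters `c b`. -/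
def wordTransvection (i : α) (c : β → α) : FreeGroup β × FreeGroup β →* MulAut (FreeGroup α) :=
  (transvection i).comp ((FreeGroup.map c).prodMap (FreeGroup.map c))

theorem wordTransvection_side (i : α) (c : β → α) (s : Bool) (w : FreeGroup β) :
    wordTransvection i c (side s w) = oneSided i s (FreeGroup.map c w) :=
  congrArg (transvection i) (map_side (FreeGroup.map c) s w)

/-- The subgroup generated by the two-sided transvections in `P` of a letter `x_i` by words in two
further letters. -/
def transvectionCore (P : Subgroup (MulAut (FreeGroup α))) : Subgroup (MulAut (FreeGroup α)) :=
  ⨆ (i : α) (c : Fin 2 ↪ α) (_ : ∀ b, c b ≠ i),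
    (P.comap (wordTransvection i c)).map (wordTransvection i c)

/-- The properties of a subgroup `P` of `Aut(F)` that force its transvection core to have no
nontrivial homomorphism to a torsion-free abelian group. -/
structure IsAdmissible (P : Subgroup (MulAut (FreeGroup α))) : Prop where
  finiteIndex {i : α} {c : Fin 2 ↪ α} (hi : ∀ b, c b ≠ i) :
    (P.comap (wordTransvection i c)).FiniteIndex
  partialConj_mem_normalizer {i : α} {c : Fin 2 ↪ α} (hi : ∀ b, c b ≠ i) (b : Fin 2) :
    partialConj i (of (c b)) ∈ Subgroup.normalizer (P : Set (MulAut (FreeGroup α)))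
  partialConj_mem {i : α} {c : Fin 2 ↪ α} (hi : ∀ b, c b ≠ i) :
    partialConj i (FreeGroup.map c commWord) ∈ P
  oneSided_mem {i : α} {c : Fin 2 ↪ α} (hi : ∀ b, c b ≠ i) (s : Bool) :
    oneSided i s (FreeGroup.map c commCommWord) ∈ P

variable {P : Subgroup (MulAut (FreeGroup α))} {d : Fin 2 ↪ α} {s : Bool}

theorem transvectionCore_le (P : Subgroup (MulAut (FreeGroup α))) : transvectionCore P ≤ P :=
  iSup_le fun _ => iSup_le fun _ => iSup_le fun _ => Subgroup.map_comap_le _ _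

theorem wordTransvection_mem_transvectionCore (hd : ∀ b, d b ≠ i)
    {p : FreeGroup (Fin 2) × FreeGroup (Fin 2)} (hp : wordTransvection i d p ∈ P) :
    wordTransvection i d p ∈ transvectionCore P :=
  Subgroup.mem_iSup_of_mem i (Subgroup.mem_iSup_of_mem d (Subgroup.mem_iSup_of_mem hd
    (Subgroup.mem_map_of_mem _ hp)))

theorem partialConj_mem_transvectionCore (hd : ∀ b, d b ≠ i) {w : FreeGroup (Fin 2)}
    (hw : partialConj i (FreeGroup.map d w) ∈ P) :
    partialConj i (FreeGroup.map d w) ∈ transvectionCore P :=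
  wordTransvection_mem_transvectionCore (p := (w, w)) hd hw

theorem oneSided_mem_transvectionCore (hd : ∀ b, d b ≠ i) {w : FreeGroup (Fin 2)}
    (hw : oneSided i s (FreeGroup.map d w) ∈ P) :
    oneSided i s (FreeGroup.map d w) ∈ transvectionCore P := by
  rw [← wordTransvection_side] at hw ⊢
  exact wordTransvection_mem_transvectionCore hd hw

theorem oneSided_map_pow_mem {M : ℕ} (hM : ∀ p, wordTransvection i d p ^ M ∈ P) (s : Bool)
    (u : FreeGroup (Fin 2)) : oneSided i s (FreeGroup.map d (u ^ M)) ∈ P := by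
  rw [← wordTransvection_side, map_pow, map_pow]
  exact hM _

theorem monoidHom_transvectionCore_ext {A : Type*} [Group A] {φ ψ : transvectionCore P →* A}
    (h : ∀ i (d : Fin 2 ↪ α) (hd : ∀ b, d b ≠ i) p (hp : wordTransvection i d p ∈ P),
      φ ⟨_, wordTransvection_mem_transvectionCore hd hp⟩ =
        ψ ⟨_, wordTransvection_mem_transvectionCore hd hp⟩) : φ = ψ := by
  have hle : transvectionCore P ≤ (φ.eqLocus ψ).map (transvectionCore P).subtype := by
    refine iSup_le fun i => iSup_le fun d => iSup_le fun hd => Subgroup.map_le_iff_le_comap.2 ?_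
    exact fun p hp => ⟨⟨_, wordTransvection_mem_transvectionCore hd hp⟩, h i d hd p hp, rfl⟩
  ext x
  obtain ⟨y, hy, hyx⟩ := hle x.2
  obtain rfl : y = x := Subtype.ext hyx
  exact hy

namespace IsAdmissible

variable [Finite α] (hP : IsAdmissible P)
include hP

theorem fg_transvectionCore : (transvectionCore P).FG := by
  refine .iSup _ fun i => .iSup _ fun d => .iSup _ fun hd => ?_
  have := hP.finiteIndex hd
  rw [← Group.fg_iff_subgroup_fg]
  exact Group.fg_of_surjective ((wordTransvection i d).subgroupMap_surjective _)

theorem exists_pow_mem : ∃ M ≠ 0, ∀ i (d : Fin 2 ↪ α), (∀ b, d b ≠ i) →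
    ∀ p, wordTransvection i d p ^ M ∈ P := by
  obtain ⟨N, hN⟩ := Finite.bddAbove_range fun p : α × (Fin 2 ↪ α) =>
    (P.comap (wordTransvection p.1 p.2)).index
  refine ⟨N.factorial, N.factorial_ne_zero, fun i d hd p => ?_⟩
  have := hP.finiteIndex hd
  rw [← map_pow]
  exact Subgroup.pow_mem_of_index_ne_zero_of_dvd Subgroup.FiniteIndex.index_ne_zero p
    fun m hm hle => Nat.dvd_factorial hm (hle.trans (hN ⟨(i, d), rfl⟩))

end IsAdmissible

/-- The words `w` in the letters `d b` for which `P` contains both the `s`-sided transvection of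
`x_i` by `w` and `x_l ↦ x_l w`. -/
def goodWords (P : Subgroup (MulAut (FreeGroup α))) (i l : α) (s : Bool) (d : Fin 2 ↪ α) :
    Subgroup (FreeGroup (Fin 2)) :=
  P.comap ((oneSided i s).comp (FreeGroup.map d)) ⊓
    P.comap ((oneSided l false).comp (FreeGroup.map d))

/-- A good word acts by a one-sided transvection in the transvection core. -/
def goodWordsHom (hi : ∀ b, d b ≠ i) : goodWords P i l s d →* transvectionCore P :=
  (((oneSided i s).comp (FreeGroup.map d)).comp (goodWords P i l s d).subtype).codRestrict _
    fun w => oneSided_mem_transvectionCore hi w.2.1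

theorem coe_goodWordsHom (hi : ∀ b, d b ≠ i) (w : goodWords P i l s d) :
    (goodWordsHom hi w : MulAut (FreeGroup α)) = oneSided i s (FreeGroup.map d w) :=
  rfl

theorem map_commutator_commutator {G : Type*} [Group G] (a : G →* G) {t y w : G}
    (hy : a y = y * w) (ht : a t = t) :
    a ⁅⁅y⁻¹, t⁆, t⁆ = w⁻¹ * (⁅y⁻¹, t⁆ * (t * w * t⁻¹ * (t * t * w * (t * t)⁻¹)⁻¹) * ⁅y⁻¹, t⁆⁻¹) *
      ⁅⁅y⁻¹, t⁆, t⁆ * (t * w * t⁻¹) := by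
  simp only [commutatorElement_def, map_mul, map_inv, hy, ht]
  group

theorem pow_mem_goodWords (hi : ∀ b, d b ≠ i) (hl : ∀ b, d b ≠ l) {M : ℕ}
    (hM : ∀ i (c : Fin 2 ↪ α), (∀ b, c b ≠ i) → ∀ p, wordTransvection i c p ^ M ∈ P) (s : Bool)
    (u : FreeGroup (Fin 2)) : u ^ M ∈ goodWords P i l s d :=
  ⟨oneSided_map_pow_mem (hM i d hi) s u, oneSided_map_pow_mem (hM l d hl) false u⟩

theorem map_goodWordsHom_mul_pow_eq {A : Type*} [CommGroup A] (φ : transvectionCore P →* A)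
    (hil : i ≠ l) (hi : ∀ b, d b ≠ i) (hl : ∀ b, d b ≠ l) {M : ℕ}
    (hM : ∀ i (c : Fin 2 ↪ α), (∀ b, c b ≠ i) → ∀ p, wordTransvection i c p ^ M ∈ P)
    (hmem : ∀ u : FreeGroup (Fin 2), u ^ M ∈ goodWords P i l s d) {b b' : Fin 2} (hb : b ≠ b') :
    φ (goodWordsHom hi ⟨(of b' * of b ^ M) ^ M, hmem _⟩) =
      φ (goodWordsHom hi ⟨of b' ^ M, hmem _⟩) := by
  have hpair := letterPair_ne (hl b) (d.injective.ne hb) (hl b').symm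
  let a : transvectionCore P := ⟨oneSided (d b') false (FreeGroup.map _ (of 0 ^ M)),
    oneSided_mem_transvectionCore hpair (oneSided_map_pow_mem (hM _ _ hpair) _ _)⟩
  have hconj : a * goodWordsHom hi ⟨of b' ^ M, hmem _⟩ * a⁻¹ =
      goodWordsHom hi ⟨(of b' * of b ^ M) ^ M, hmem _⟩ := by
    refine Subtype.ext ((oneSided_conj_oneSided (hi b').symm
      (letterPair_ne (hl b) (hi b) hil.symm) hpair s false _ _).trans (congrArg _ ?_))
    change oneSided _ _ _ (FreeGroup.map d (of b' ^ M)) = FreeGroup.map d ((of b' * of b ^ M) ^ M)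
    rw [map_pow (FreeGroup.map d), map_pow (oneSided _ _ _), FreeGroup.map.of,
      oneSided_false_of_self hpair]
    simp only [map_pow, map_mul, FreeGroup.map.of]
    rfl
  rw [← hconj]
  simp only [map_mul φ, map_inv φ, mul_inv_cancel_comm]

namespace IsAdmissible

section GoodWords

variable (hP : IsAdmissible P)
include hP

theorem of_mem_normalizer_comap_oneSided (hi : ∀ b, d b ≠ i) (b : Fin 2) :
    of b ∈ Subgroup.normalizer
      (P.comap ((oneSided i s).comp (FreeGroup.map d)) : Set (FreeGroup (Fin 2))) := by
  rw [Subgroup.mem_normalizer_iff]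
  intro w
  have h := Subgroup.mem_normalizer_iff.1 (hP.partialConj_mem_normalizer hi b)
    (oneSided i s (FreeGroup.map d w))
  rw [partialConj_conj_oneSided] at h
  simpa only [SetLike.mem_coe, Subgroup.mem_comap, MonoidHom.comp_apply, map_mul, map_inv,
    FreeGroup.map.of] using h

theorem normal_goodWords (hi : ∀ b, d b ≠ i) (hl : ∀ b, d b ≠ l) :
    (goodWords P i l s d).Normal := by
  rw [← Subgroup.normalizer_eq_top_iff, ← top_le_iff, ← FreeGroup.closure_range_of,
    Subgroup.closure_le]
  rintro _ ⟨b, rfl⟩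
  exact Subgroup.inf_normalizer_le_normalizer_inf
    ⟨hP.of_mem_normalizer_comap_oneSided hi b, hP.of_mem_normalizer_comap_oneSided hl b⟩

theorem finiteIndex_comap_oneSided (hi : ∀ b, d b ≠ i) (s : Bool) :
    (P.comap ((oneSided i s).comp (FreeGroup.map d))).FiniteIndex := by
  have := hP.finiteIndex hi
  have hside : (oneSided i s).comp (FreeGroup.map d) = (wordTransvection i d).comp (side s) :=
    MonoidHom.ext fun w => (wordTransvection_side i d s w).symm
  rw [hside, ← Subgroup.comap_comap]
  exact finiteIndex_comap _ _

theorem finiteIndex_goodWords (hi : ∀ b, d b ≠ i) (hl : ∀ b, d b ≠ l) :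
    (goodWords P i l s d).FiniteIndex := by
  have := hP.finiteIndex_comap_oneSided hi s
  have := hP.finiteIndex_comap_oneSided hl false
  rw [goodWords]
  infer_instance

variable {A : Type*} [CommGroup A] (φ : transvectionCore P →* A)

/-- Both sides are read off from conjugating the transvection by `[[y⁻¹, t], t]`, where `y = x_l`,
by `y ↦ y * w`. -/
theorem map_goodWordsHom_mul_conj (hil : i ≠ l) (hi : ∀ b, d b ≠ i) (hl : ∀ b, d b ≠ l)
    [(goodWords P i l s d).Normal] (b : Fin 2) (w : goodWords P i l s d) :
    φ (goodWordsHom hi w) * φ (goodWordsHom hi (MulAut.conjNormal (of b * of b) w)) =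
      φ (goodWordsHom hi (MulAut.conjNormal (of b) w)) ^ 2 := by
  have hpair := letterPair_ne (hl b) (hi b) hil.symm
  let a : transvectionCore P := ⟨_, oneSided_mem_transvectionCore hl w.2.2⟩
  let v : transvectionCore P := ⟨_, oneSided_mem_transvectionCore hpair (hP.oneSided_mem hpair s)⟩
  let e : transvectionCore P :=
    ⟨_, partialConj_mem_transvectionCore hpair (hP.partialConj_mem hpair)⟩
  have hconj : a * v * a⁻¹ = (goodWordsHom hi w)⁻¹ *
      (e * (goodWordsHom hi (MulAut.conjNormal (of b) w) *
        (goodWordsHom hi (MulAut.conjNormal (of b * of b) w))⁻¹) * e⁻¹) * v *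
      goodWordsHom hi (MulAut.conjNormal (of b) w) := by
    refine Subtype.ext ((oneSided_conj_oneSided hil hi hl s false w.1 _).trans ?_)
    have hexpand := map_commutator_commutator (oneSided l false (FreeGroup.map d w)).toMonoidHom
      (oneSided_false_of_self hl w) (oneSided_of_ne (hl b) false _)
    rw [MulEquiv.coe_toMonoidHom, ← map_letterPair_commCommWord (hl b),
      ← map_letterPair_commWord (hl b)] at hexpand
    rw [hexpand, map_mul, map_mul, map_mul, ← partialConj_conj_oneSided, map_mul (oneSided i s),
      map_inv (oneSided i s), map_inv (oneSided i s)]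
    simp only [Subgroup.coe_mul, Subgroup.coe_inv, coe_goodWordsHom, MulAut.conjNormal_apply, e, v]
    simp only [map_mul, map_inv, FreeGroup.map.of]
  have hφ := congrArg φ hconj
  rw [sq]
  simp only [map_mul φ, map_inv φ, mul_inv_cancel_comm] at hφ
  rwa [mul_right_comm, right_eq_mul, mul_assoc, inv_mul_eq_one, mul_right_comm,
    eq_mul_inv_iff_mul_eq] at hφ

variable [Finite α] [IsMulTorsionFree A]

/-- With `t` the letter `d b`, the values of `φ` at `tʳ * w * t⁻ʳ` form a geometric progression,
which is periodic because conjugation by some power of `t` is inner in the transvection core. -/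
theorem map_goodWordsHom_conj_of (hil : i ≠ l) (hi : ∀ b, d b ≠ i) (hl : ∀ b, d b ≠ l)
    [(goodWords P i l s d).Normal] (b : Fin 2) (w : goodWords P i l s d) :
    φ (goodWordsHom hi (MulAut.conjNormal (of b) w)) = φ (goodWordsHom hi w) := by
  obtain ⟨M, hM, hpow⟩ := hP.exists_pow_mem
  let f (r : ℕ) : A := φ (goodWordsHom hi (MulAut.conjNormal (of b ^ r) w))
  have hf (r : ℕ) : f r * f (r + 2) = f (r + 1) ^ 2 := by
    have h := hP.map_goodWordsHom_mul_conj φ hil hi hl b (MulAut.conjNormal (of b ^ r) w)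
    simpa only [← MulAut.mul_apply, ← map_mul (MulAut.conjNormal (H := goodWords P i l s d)),
      mul_assoc, ← pow_succ'] using h
  have hperiod : f M = f 0 := by
    have hp : partialConj i (FreeGroup.map d (of b ^ M)) ∈ P := by
      rw [map_pow, map_pow]
      exact hpow i d hi (of b, of b)
    let p : transvectionCore P := ⟨_, partialConj_mem_transvectionCore hi hp⟩
    have hconj : goodWordsHom hi (MulAut.conjNormal (of b ^ M) w) =
        p * goodWordsHom hi w * p⁻¹ := by
      refine Subtype.ext (Eq.trans ?_ (partialConj_conj_oneSided i s _ _).symm)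
      rw [coe_goodWordsHom, MulAut.conjNormal_apply, map_mul (FreeGroup.map d),
        map_mul (FreeGroup.map d), map_inv (FreeGroup.map d)]
      rfl
    simp only [f, hconj, map_mul φ, map_inv φ, mul_inv_cancel_comm, pow_zero, map_one,
      MulAut.one_apply]
  simpa only [f, pow_one, pow_zero, map_one, MulAut.one_apply] using
    apply_one_eq_apply_zero_of_mul_eq_sq hf hM hperiod

theorem map_goodWordsHom_conj (hil : i ≠ l) (hi : ∀ b, d b ≠ i) (hl : ∀ b, d b ≠ l)
    [(goodWords P i l s d).Normal] (g : FreeGroup (Fin 2)) (w : goodWords P i l s d) :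
    φ.comp (goodWordsHom hi) (MulAut.conjNormal g w) = φ.comp (goodWordsHom hi) w := by
  refine map_conjNormal_eq_of_generators (FreeGroup.closure_range_of _) ?_ g w
  rintro _ ⟨b, rfl⟩ w
  exact hP.map_goodWordsHom_conj_of φ hil hi hl b w

theorem map_goodWordsHom_eq_one (hil : i ≠ l) (hi : ∀ b, d b ≠ i) (hl : ∀ b, d b ≠ l)
    (w : goodWords P i l s d) : φ (goodWordsHom hi w) = 1 := by
  have := hP.normal_goodWords (s := s) hi hl
  have := hP.finiteIndex_goodWords (s := s) hi hl
  obtain ⟨M, hM, hpow⟩ := hP.exists_pow_mem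
  have hmem := pow_mem_goodWords hi hl hpow s
  have hinv := hP.map_goodWordsHom_conj (s := s) φ hil hi hl
  let χ := φ.comp (goodWordsHom (P := P) (l := l) (s := s) hi)
  have hinj := IsMulTorsionFree.pow_left_injective (M := A) hM
  have htransfer : χ.transfer = 1 := by
    ext b
    obtain ⟨b', hb⟩ := exists_ne b
    have hpowers : χ.transfer (of b' * of b ^ M) = χ.transfer (of b') := hinj <| by
      change χ.transfer _ ^ M = χ.transfer _ ^ M
      rw [transfer_pow_eq_map_pow_index hinv (hmem _), transfer_pow_eq_map_pow_index hinv (hmem _)]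
      exact congrArg (· ^ _) (map_goodWordsHom_mul_pow_eq φ hil hi hl hpow hmem hb.symm)
    rw [map_mul, mul_eq_left, map_pow] at hpowers
    exact hinj (hpowers.trans (one_pow M).symm)
  exact DFunLike.congr_fun (eq_one_of_transfer_eq_one hinv htransfer) w

end GoodWords

theorem map_wordTransvection_eq_one {A : Type*} [CommGroup A] [IsMulTorsionFree A]
    (hP : IsAdmissible P) [Finite α] (φ : transvectionCore P →* A) (hil : i ≠ l)
    (hi : ∀ b, d b ≠ i) (hl : ∀ b, d b ≠ l) {p : FreeGroup (Fin 2) × FreeGroup (Fin 2)}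
    (hp : wordTransvection i d p ∈ P) :
    φ ⟨_, wordTransvection_mem_transvectionCore hi hp⟩ = 1 := by
  obtain ⟨M, hM, hpow⟩ := hP.exists_pow_mem
  have hsplit : (⟨_, wordTransvection_mem_transvectionCore hi hp⟩ : transvectionCore P) ^ M =
      goodWordsHom hi ⟨_, pow_mem_goodWords hi hl hpow true p.1⟩ *
        goodWordsHom hi ⟨_, pow_mem_goodWords hi hl hpow false p.2⟩ := by
    refine Subtype.ext ?_
    rw [Subgroup.coe_mul, coe_goodWordsHom, coe_goodWordsHom, ← wordTransvection_side,
      ← wordTransvection_side, ← map_mul, Subgroup.coe_pow, ← map_pow]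
    exact congrArg _ (Prod.ext (mul_one _).symm (one_mul _).symm)
  refine IsMulTorsionFree.pow_left_injective hM ?_
  change φ _ ^ M = 1 ^ M
  rw [← map_pow, hsplit, map_mul, hP.map_goodWordsHom_eq_one φ hil hi hl,
    hP.map_goodWordsHom_eq_one φ hil hi hl, mul_one, one_pow]

theorem subsingleton_monoidHom (hP : IsAdmissible P) (hα : 4 ≤ Nat.card α) :
    Subsingleton (transvectionCore P →* Multiplicative ℝ) := by
  have : Finite α := Nat.finite_of_card_ne_zero (by lia)
  refine subsingleton_of_forall_eq 1 fun φ => monoidHom_transvectionCore_ext fun i d hd p hp => ?_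
  have hsurj : ¬ Function.Surjective fun o : Option (Fin 2) => o.elim i d := fun h => by
    have := Nat.card_le_card_of_surjective _ h
    simp only [Nat.card_eq_fintype_card, Fintype.card_option, Fintype.card_fin] at this hα
    lia
  obtain ⟨l, hl⟩ := not_forall.1 hsurj
  rw [not_exists] at hl
  exact hP.map_wordTransvection_eq_one φ (hl none) hd (fun b => hl (some b)) hp

theorem finiteIndex_comap_commutator (hP : IsAdmissible P) (hα : 4 ≤ Nat.card α)
    (hd : ∀ b, d b ≠ i) :
    (⁅transvectionCore P, transvectionCore P⁆.comap (wordTransvection i d)).FiniteIndex := by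
  have : Finite α := Nat.finite_of_card_ne_zero (by lia)
  have := (Group.fg_iff_subgroup_fg _).2 hP.fg_transvectionCore
  have := hP.subsingleton_monoidHom hα
  have := finiteIndex_commutator (Q := transvectionCore P)
  have hcore : P.comap (wordTransvection i d) ≤ (transvectionCore P).comap (wordTransvection i d) :=
    fun _ hp => wordTransvection_mem_transvectionCore hd hp
  have := hP.finiteIndex hd
  have := Subgroup.finiteIndex_of_le hcore
  have hrel : ⁅transvectionCore P, transvectionCore P⁆.relIndex (transvectionCore P) ≠ 0 := by
    rw [Subgroup.relIndex, ← Subgroup.map_subtype_commutator, Subgroup.subgroupOf,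
      Subgroup.comap_map_eq_self_of_injective (Subgroup.subtype_injective _)]
    exact Subgroup.FiniteIndex.index_ne_zero
  rw [Subgroup.finiteIndex_iff, ← Subgroup.relIndex_mul_index
    (Subgroup.comap_mono (Subgroup.commutator_le_self (transvectionCore P))),
    Subgroup.relIndex_comap]
  refine mul_ne_zero (fun h => hrel ?_) Subgroup.FiniteIndex.index_ne_zero
  exact Subgroup.relIndex_eq_zero_of_le_right (Subgroup.map_comap_le _ _) h

theorem commutator_transvectionCore (hP : IsAdmissible P) (hα : 4 ≤ Nat.card α)
    (hpartialConj : ∀ {i : α} {c : Fin 2 ↪ α}, (∀ b, c b ≠ i) → ∀ b, partialConj i (of (c b)) ∈ P)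
    (honeSided : ∀ {i : α} {c : Fin 2 ↪ α}, (∀ b, c b ≠ i) →
      ∀ s, oneSided i s (FreeGroup.map c commWord) ∈ P) :
    IsAdmissible ⁅transvectionCore P, transvectionCore P⁆ := by
  have hcore {i : α} {c : Fin 2 ↪ α} (hi : ∀ b, c b ≠ i) (b : Fin 2) :
      partialConj i (FreeGroup.map c (of b)) ∈ transvectionCore P := by
    refine partialConj_mem_transvectionCore hi ?_
    rw [FreeGroup.map.of]
    exact hpartialConj hi b
  refine ⟨hP.finiteIndex_comap_commutator hα, fun hi b => ?_, fun {i c} hi => ?_,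
    fun {i c} hi s => ?_⟩
  · rw [← FreeGroup.map.of]
    exact Subgroup.normalizer_commutator_ge_left _ _ (hcore hi b)
  · rw [commWord, map_commutatorElement, map_commutatorElement, map_inv, map_inv]
    exact Subgroup.commutator_mem_commutator (inv_mem (hcore hi 1)) (hcore hi 0)
  · have hexpand : oneSided i s (FreeGroup.map c commCommWord) =
        ⁅oneSided i s (FreeGroup.map c commWord), partialConj i (FreeGroup.map c (of 0))⁆ := by
      rw [commutatorElement_def, mul_assoc, mul_assoc, ← mul_assoc (partialConj i _), ← map_inv,
        partialConj_conj_oneSided, ← map_mul]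
      simp only [commCommWord, commutatorElement_def, map_mul, map_inv, mul_assoc]
    rw [hexpand]
    exact Subgroup.commutator_mem_commutator
      (oneSided_mem_transvectionCore hi (honeSided hi s)) (hcore hi 0)

theorem transvectionCore_ne_bot (hP : IsAdmissible P) [Finite α] (hd : ∀ b, d b ≠ i) :
    transvectionCore P ≠ ⊥ := fun hbot => by
  obtain ⟨M, hM, hpow⟩ := hP.exists_pow_mem
  have hmem := oneSided_mem_transvectionCore hd (oneSided_map_pow_mem (hpow i d hd) false (of 0))
  rw [hbot, Subgroup.mem_bot] at hmem
  have hfix := oneSided_false_of_self hd (of 0 ^ M)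
  rw [hmem, MulAut.one_apply, left_eq_mul, map_pow, FreeGroup.map.of] at hfix
  exact FreeGroup.of_ne_one _ (IsMulTorsionFree.pow_left_injective hM (hfix.trans (one_pow M).symm))

end IsAdmissible

theorem transvection_mem_IA {n : ℕ} (i : Fin n) {p : FreeGrp n × FreeGrp n}
    (hp : Abelianization.of p.1 = Abelianization.of p.2) : transvection i p ∈ IA n :=
  DFunLike.congr_fun (FreeGroup.ext_hom (Abelianization.of.comp (transvection i p).toMonoidHom)
    Abelianization.of fun m => by
      rw [MonoidHom.comp_apply, MulEquiv.coe_toMonoidHom]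
      obtain rfl | h := eq_or_ne m i
      · have herase :
            Abelianization.of (eraseLetter m p.1) = Abelianization.of (eraseLetter m p.2) :=
          congrArg (Abelianization.map (eraseLetter m)) hp
        rw [transvection_of_self, map_mul, map_mul, map_inv, herase, inv_mul_cancel_comm]
      · rw [transvection_of_ne h])

theorem partialConj_mem_IA {n : ℕ} (i : Fin n) (g : FreeGrp n) : partialConj i g ∈ IA n :=
  transvection_mem_IA i rfl

theorem oneSided_commutator_mem_IA {n : ℕ} (i : Fin n) (s : Bool) (g h : FreeGrp n) :
    oneSided i s ⁅g, h⁆ ∈ IA n := by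
  have hone : Abelianization.of ⁅g, h⁆ = 1 := by
    rw [map_commutatorElement, commutatorElement_eq_one_iff_commute]
    exact Commute.all _ _
  refine transvection_mem_IA i ?_
  cases s
  · exact hone.symm
  · exact hone

theorem isAdmissible_of_IA_le {n : ℕ} {Γ : Subgroup (AutF n)} [Γ.FiniteIndex] (hIA : IA n ≤ Γ) :
    IsAdmissible Γ where
  finiteIndex _ := finiteIndex_comap _ _
  partialConj_mem_normalizer _ _ := Subgroup.le_normalizer (hIA (partialConj_mem_IA _ _))
  partialConj_mem _ := hIA (partialConj_mem_IA _ _)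
  oneSided_mem _ s := by
    rw [commCommWord, map_commutatorElement]
    exact hIA (oneSided_commutator_mem_IA _ _ _ _)

theorem exists_le_commutator_fg_subsingleton_monoidHom {n : ℕ} (hn : 4 ≤ n) {Γ : Subgroup (AutF n)}
    [Γ.FiniteIndex] (hIA : IA n ≤ Γ) :
    ∃ Q ≤ ⁅Γ, Γ⁆, Q.FG ∧ Subsingleton (Q →* Multiplicative ℝ) ∧ Q ≠ ⊥ := by
  have hcard : 4 ≤ Nat.card (Fin n) := by rwa [Nat.card_fin]
  have hP : IsAdmissible ⁅transvectionCore Γ, transvectionCore Γ⁆ :=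
    (isAdmissible_of_IA_le hIA).commutator_transvectionCore hcard
      (fun _ _ => hIA (partialConj_mem_IA _ _)) fun _ s => by
        rw [commWord, map_commutatorElement]
        exact hIA (oneSided_commutator_mem_IA _ _ _ _)
  refine ⟨transvectionCore _, ?_, hP.fg_transvectionCore, hP.subsingleton_monoidHom hcard, ?_⟩
  · exact (transvectionCore_le _).trans
      (Subgroup.commutator_mono (transvectionCore_le Γ) (transvectionCore_le Γ))
  · have hne {a b : Fin 4} (hab : a ≠ b) : Fin.castLE hn a ≠ Fin.castLE hn b :=
      (Fin.castLE_injective hn).ne hab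
    exact hP.transvectionCore_ne_bot (letterPair_ne (i := Fin.castLE hn 0) (j := Fin.castLE hn 1)
      (l := Fin.castLE hn 2) (hne (by decide)) (hne (by decide)) (hne (by decide)))

theorem exists_le_commutator_range_fg_subsingleton_monoidHom {n : ℕ} (hn : 4 ≤ n)
    {Γ : Subgroup (AutF n)} [Γ.FiniteIndex] (hIA : IA n ≤ Γ) {G : Type*} [Group G] {θ : Γ →* G}
    (hθ : Function.Injective θ) :
    ∃ Q ≤ ⁅θ.range, θ.range⁆, Group.FG Q ∧ Subsingleton (Q →* Multiplicative ℝ) ∧ Q ≠ ⊥ := by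
  obtain ⟨Q, hQ, hfg, hchar, hne⟩ := exists_le_commutator_fg_subsingleton_monoidHom hn hIA
  let e : Q ≃* (Q.subgroupOf Γ).map θ :=
    (Subgroup.subgroupOfEquivOfLe (hQ.trans (Subgroup.commutator_le_self Γ))).symm.trans
      ((Q.subgroupOf Γ).equivMapOfInjective θ hθ)
  refine ⟨(Q.subgroupOf Γ).map θ, ?_, ?_, ⟨fun φ ψ => ?_⟩, ?_⟩
  · rw [MonoidHom.range_eq_map, ← Subgroup.map_commutator]
    refine Subgroup.map_mono ((Subgroup.comap_mono hQ).trans_eq ?_)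
    rw [← Subgroup.map_subtype_commutator]
    exact Subgroup.comap_map_eq_self_of_injective (Subgroup.subtype_injective _) _
  · have := (Group.fg_iff_subgroup_fg Q).2 hfg
    exact Group.fg_of_surjective (f := e.toMonoidHom) e.surjective
  · exact (MonoidHom.cancel_right e.surjective).1
      (Subsingleton.elim (φ.comp e.toMonoidHom) (ψ.comp e.toMonoidHom))
  · rw [← Subgroup.nontrivial_iff_ne_bot] at hne ⊢
    exact e.symm.toEquiv.nontrivial

end Transvections

section BlockEmbeddings

variable {α β γ : Type*}

/-- The endomorphism of a free group that acts as `e` on the letters in the range of `f` and fixes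
the other letters. -/
def extendHom (f : β ↪ α) (e : FreeGroup β →* FreeGroup β) : FreeGroup α →* FreeGroup α :=
  FreeGroup.lift (Function.extend f (fun b => FreeGroup.map f (e (FreeGroup.of b))) FreeGroup.of)

theorem extendHom_map (f : β ↪ α) (e : FreeGroup β →* FreeGroup β) (y : FreeGroup β) :
    extendHom f e (FreeGroup.map f y) = FreeGroup.map f (e y) :=
  DFunLike.congr_fun (FreeGroup.ext_hom ((extendHom f e).comp (FreeGroup.map f))
    ((FreeGroup.map f).comp e) fun b => by
      rw [MonoidHom.comp_apply, FreeGroup.map.of, extendHom, FreeGroup.lift_apply_of,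
        f.injective.extend_apply, MonoidHom.comp_apply]) y

theorem extendHom_of (f : β ↪ α) (e : FreeGroup β →* FreeGroup β) (b : β) :
    extendHom f e (FreeGroup.of (f b)) = FreeGroup.map f (e (FreeGroup.of b)) := by
  rw [← FreeGroup.map.of, extendHom_map]

theorem extendHom_of_notMem_range {f : β ↪ α} {a : α} (ha : a ∉ Set.range f)
    (e : FreeGroup β →* FreeGroup β) : extendHom f e (FreeGroup.of a) = FreeGroup.of a := by
  rw [extendHom, FreeGroup.lift_apply_of, Function.extend_apply' _ _ _ ha]

theorem extendHom_id (f : β ↪ α) : extendHom f (MonoidHom.id _) = MonoidHom.id _ :=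
  FreeGroup.ext_hom _ _ fun a => by
    by_cases ha : a ∈ Set.range f
    · obtain ⟨b, rfl⟩ := ha
      rw [extendHom_of, MonoidHom.id_apply, MonoidHom.id_apply, FreeGroup.map.of]
    · rw [extendHom_of_notMem_range ha, MonoidHom.id_apply]

theorem extendHom_comp (f : β ↪ α) (e e' : FreeGroup β →* FreeGroup β) :
    extendHom f (e.comp e') = (extendHom f e).comp (extendHom f e') :=
  FreeGroup.ext_hom _ _ fun a => by
    rw [MonoidHom.comp_apply]
    by_cases ha : a ∈ Set.range f
    · obtain ⟨b, rfl⟩ := ha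
      rw [extendHom_of, extendHom_of, extendHom_map, MonoidHom.comp_apply]
    · rw [extendHom_of_notMem_range ha, extendHom_of_notMem_range ha, extendHom_of_notMem_range ha]

/-- The homomorphism `Aut(F(β)) → Aut(F(α))` induced by an inclusion of alphabets, through
automorphisms that fix the letters outside of the smaller alphabet. -/
def extendAut (f : β ↪ α) : MulAut (FreeGroup β) →* MulAut (FreeGroup α) :=
  MonoidHom.mk'
    (fun e => (extendHom f e.toMonoidHom).toMulEquiv (extendHom f e.symm.toMonoidHom)
      (by
        rw [← extendHom_comp, ← extendHom_id f]
        exact congrArg _ (MulEquiv.coe_monoidHom_symm_comp_coe_monoidHom e))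
      (by
        rw [← extendHom_comp, ← extendHom_id f]
        exact congrArg _ (MulEquiv.coe_monoidHom_comp_coe_monoidHom_symm e)))
    fun e e' => mulAut_freeGroup_ext fun a =>
      DFunLike.congr_fun (extendHom_comp f e.toMonoidHom e'.toMonoidHom) (FreeGroup.of a)

theorem extendAut_of (f : β ↪ α) (e : MulAut (FreeGroup β)) (b : β) :
    extendAut f e (FreeGroup.of (f b)) = FreeGroup.map f (e (FreeGroup.of b)) :=
  extendHom_of f e.toMonoidHom b

theorem extendAut_of_notMem_range {f : β ↪ α} {a : α} (ha : a ∉ Set.range f)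
    (e : MulAut (FreeGroup β)) : extendAut f e (FreeGroup.of a) = FreeGroup.of a :=
  extendHom_of_notMem_range ha e.toMonoidHom

theorem extendAut_injective (f : β ↪ α) : Function.Injective (extendAut f) := fun e e' h =>
  mulAut_freeGroup_ext fun b => FreeGroup.map_injective f.injective <| by
    rw [← extendAut_of, h, extendAut_of]

theorem extendAut_extendAut_of {f : β ↪ α} {g : γ ↪ α} (h : ∀ b, f b ∉ Set.range g)
    (e : MulAut (FreeGroup β)) (e' : MulAut (FreeGroup γ)) (b : β) :
    extendAut f e (extendAut g e' (FreeGroup.of (f b))) =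
      extendAut g e' (extendAut f e (FreeGroup.of (f b))) := by
  rw [extendAut_of_notMem_range (h b), extendAut_of]
  exact (map_freeGroupMap_eq_self (f := (extendAut g e').toMonoidHom)
    (fun b => extendAut_of_notMem_range (h b) e') _).symm

theorem commute_extendAut {f : β ↪ α} {g : γ ↪ α} (h : ∀ b c, f b ≠ g c)
    (e : MulAut (FreeGroup β)) (e' : MulAut (FreeGroup γ)) :
    Commute (extendAut f e) (extendAut g e') := by
  refine mulAut_freeGroup_ext fun a => ?_
  simp only [MulAut.mul_apply]
  by_cases hf : a ∈ Set.range f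
  · obtain ⟨b, rfl⟩ := hf
    exact extendAut_extendAut_of (fun b ⟨c, hc⟩ => h b c hc.symm) e e' b
  by_cases hg : a ∈ Set.range g
  · obtain ⟨c, rfl⟩ := hg
    exact (extendAut_extendAut_of (fun c ⟨b, hb⟩ => h b c hb) e' e c).symm
  simp only [extendAut_of_notMem_range hf, extendAut_of_notMem_range hg]

theorem IA_le_comap_extendAut {m n : ℕ} (f : Fin m ↪ Fin n) :
    IA m ≤ (IA n).comap (extendAut f) := fun e he =>
  DFunLike.congr_fun (FreeGroup.ext_hom (Abelianization.of.comp (extendAut f e).toMonoidHom)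
    Abelianization.of fun a => by
      rw [MonoidHom.comp_apply, MulEquiv.coe_toMonoidHom]
      by_cases ha : a ∈ Set.range f
      · obtain ⟨b, rfl⟩ := ha
        rw [extendAut_of, ← FreeGroup.map.of]
        exact congrArg (Abelianization.map (FreeGroup.map f)) (he (FreeGroup.of b))
      · rw [extendAut_of_notMem_range ha])

end BlockEmbeddings

/-- For `n ≥ 8`, if `Γ` is a finite index subgroup of `Aut(Fₙ)`
containing the subgroup `IAₙ` of IA-automorphisms, then any orientation preserving `C¹`
action of `Γ` on the circle cannot be faithful. -/
theorem aut_finite_index_IA_action_not_faithful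
    (n : ℕ) (hn : 8 ≤ n)
    (Γ : Subgroup (AutF n)) [Γ.FiniteIndex] (hIA : IA n ≤ Γ)
    (ρ : Γ →* Equiv.Perm 𝕊) (hρ : ∀ g : Γ, IsC1Diffeo (ρ g)) :
    ¬ Function.Injective ρ := by
  intro hinj
  let θ (f : Fin 4 ↪ Fin n) : Γ.comap (extendAut f) →* Equiv.Perm 𝕊 :=
    ρ.comp ((extendAut f).subgroupComap Γ)
  have hθ (f : Fin 4 ↪ Fin n) : Function.Injective (θ f) :=
    hinj.comp fun _ _ h => Subtype.ext (extendAut_injective f (congrArg Subtype.val h))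
  have hdiffeo (f : Fin 4 ↪ Fin n) : ∀ a ∈ (θ f).range, IsC1Diffeo a := by
    rintro _ ⟨a, rfl⟩
    exact hρ _
  have hperfect (f : Fin 4 ↪ Fin n) := by
    have := finiteIndex_comap (extendAut f) Γ
    exact exists_le_commutator_range_fg_subsingleton_monoidHom le_rfl
      ((IA_le_comap_extendAut f).trans (Subgroup.comap_mono hIA)) (hθ f)
  let f : Fin 4 ↪ Fin n := Fin.castLEEmb (by lia)
  let g : Fin 4 ↪ Fin n := (Fin.natAddEmb 4).trans (Fin.castLEEmb hn)
  have hfg (b c : Fin 4) : f b ≠ g c :=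
    Fin.ne_of_lt (b.isLt.trans_le (Nat.le_add_right 4 c))
  have hcomm : ∀ a ∈ (θ f).range, ∀ b ∈ (θ g).range, Commute a b := by
    rintro _ ⟨a, rfl⟩ _ ⟨b, rfl⟩
    exact Commute.map (x := (extendAut f).subgroupComap Γ a) (y := (extendAut g).subgroupComap Γ b)
      (Subtype.ext (commute_extendAut hfg a.1 b.1)) ρ
  obtain ⟨Q, hQ, _, _, hQne⟩ := hperfect f
  obtain ⟨Q', hQ', _, _, hQne'⟩ := hperfect g
  exact (eq_bot_or_eq_bot_of_commute (hdiffeo f) (hdiffeo g) hcomm hQ hQ').elim hQne hQne'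
end
end
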